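/- arXiv:0707.0568 — 6 statements merged into one kernel-verified Lean document; each statement's English description precedes it below -/
import Mathlib

section
/- Game G admits at least one Nash equilibrium, for every choice of channel gains H_rq(k) with H_qq(k) ≠ 0, gap parameters Γ_q ≥ 1, and spectral-mask limits p_q^max(k) ∈ (0,∞]. (Theorem 2, existence part.) -/
/-!
The payoff of user `q` is concave in the strategy of user `q`, so a profile `p` is a Nash equilibrium
as soon as it solves the variational inequality `⟪F p, y - p⟫ ≤ 0` for all feasible profiles `y`,
where `F` collects the partial derivatives of each user's payoff with respect to that user's own
powers (`GameData.marginal`, up to the factor `1 / N`). Since `log z ≤ z - 1`, this concavity step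
is an explicit inequality (`GameData.payoff_update_sub_le`). The set of feasible profiles is compact
and convex and `F` is continuous on it, so a solution exists (`exists_variational`): it is a fixed
point of `x ↦ P (x + F x)`, with `P` the metric projection onto the feasible set.

The fixed point comes from Brouwer's theorem (`brouwer`), proved here by the volume argument of
Milnor and Rogers. A continuous self-map of the ball without fixed points can be replaced by a
`C¹` one, which yields a `C¹` retraction `r` of the ball onto its sphere. For small `t > 0` the map
`x ↦ x + t (r x - x)` is a diffeomorphism of the open ball, so the integral over the ball of its
Jacobian determinant equals the volume of the ball. This integral is a polynomial in `t`, hence it is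
the volume for `t = 1` too; but there the map is `r`, whose Jacobian vanishes because `‖r‖ = 1`
(`no_retraction`).
-/

open scoped ENNReal

namespace NCGame

/-- The data of game `G`: `Q` users, `N` carriers, channel gains `chan r q k` (from source `r`
to destination `q` on carrier `k`), gap parameters `gap q ≥ 1`, and spectral-mask limits
`pmax q k ∈ (0, ∞]`. -/
structure GameData (Q N : ℕ) where
  chan : Fin Q → Fin Q → Fin N → ℂ
  gap : Fin Q → ℝ
  pmax : Fin Q → Fin N → ℝ≥0∞
  chan_diag_ne : ∀ q k, chan q q k ≠ 0
  one_le_gap : ∀ q, 1 ≤ gap q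
  pmax_pos : ∀ q k, 0 < pmax q k

namespace GameData

variable {Q N : ℕ}

/-- The strategy set `P_q` of user `q`: powers within the spectral mask whose average
does not exceed the power budget. -/
def stratSet (G : GameData Q N) (q : Fin Q) : Set (Fin N → ℝ) :=
  { p | (∀ k, 0 ≤ p k ∧ ENNReal.ofReal (p k) ≤ G.pmax q k) ∧
        (1 / (N : ℝ)) * ∑ k, p k ≤ 1 }

/-- Interference-plus-noise `1 + Σ_{r ≠ q} |H_rq(k)|² p_r(k)` seen by user `q` on carrier `k`. -/
noncomputable def interf (G : GameData Q N) (q : Fin Q) (p : Fin Q → Fin N → ℝ)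
    (k : Fin N) : ℝ :=
  1 + ∑ r ∈ Finset.univ.erase q, ‖G.chan r q k‖ ^ 2 * p r k

/-- The payoff `R_q(p)` of user `q` at the strategy profile `p`. -/
noncomputable def payoff (G : GameData Q N) (q : Fin Q) (p : Fin Q → Fin N → ℝ) : ℝ :=
  (1 / (N : ℝ)) * ∑ k, Real.log (1 +
    (1 / G.gap q) * (‖G.chan q q k‖ ^ 2 * p q k) / G.interf q p k)

/-- `p` is a Nash equilibrium of game `G`. -/
def isNE (G : GameData Q N) (p : Fin Q → Fin N → ℝ) : Prop :=
  (∀ q, p q ∈ G.stratSet q) ∧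
  ∀ q, ∀ pq ∈ G.stratSet q, G.payoff q (Function.update p q pq) ≤ G.payoff q p

end GameData

end NCGame

namespace NCGame

open Metric Set MeasureTheory Topology Polynomial

/-! ### Brouwer's theorem and variational inequalities -/

section Brouwer

variable {E : Type*} [NormedAddCommGroup E] [InnerProductSpace ℝ E] [FiniteDimensional ℝ E]

/-- Lagrange interpolation of `t ↦ det (1 + t A)`, a polynomial of degree at most `dim E`, with nodes
`s`. The coefficients do not depend on `A`, so the formula can be integrated termwise when `A`
varies. -/
lemma det_one_add_smul_eq_sum (s : Finset ℝ) (hs : Module.finrank ℝ E < s.card)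
    (A : E →L[ℝ] E) (t : ℝ) :
    (1 + t • A).det =
      ∑ i ∈ s, (1 + i • A).det * (Lagrange.basis s id i).eval t := by
  set b := Module.finBasis ℝ E
  set M := LinearMap.toMatrix b b (A : E →ₗ[ℝ] E) with hM
  set P : ℝ[X] := Matrix.det ((X : ℝ[X]) • M.map C + (1 : Matrix _ _ ℝ).map C) with hP
  have heval : ∀ u : ℝ, (1 + u • A).det = P.eval u := by
    intro u
    have h1 : (1 + u • A).det = (1 + u • M).det := by
      rw [ContinuousLinearMap.det, ← LinearMap.det_toMatrix b]
      congr 1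
      simp [hM, LinearMap.toMatrix_one, ContinuousLinearMap.one_def, ← Module.End.one_eq_id]
    rw [h1, hP, ← Polynomial.coe_evalRingHom, RingHom.map_det]
    congr 1
    ext i j
    by_cases hij : i = j <;> simp [hij, add_comm, mul_comm u]
  have hdeg : P.degree < s.card := by
    refine lt_of_le_of_lt (Polynomial.degree_le_natDegree) ?_
    have := Polynomial.natDegree_det_X_add_C_le M (1 : Matrix _ _ ℝ)
    rw [Fintype.card_fin] at this
    exact_mod_cast this.trans_lt hs
  rw [heval t, Lagrange.eq_interpolate (s := s) (v := id) (Function.injective_id.injOn) hdeg,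
    Lagrange.interpolate_apply, Polynomial.eval_finsetSum]
  refine Finset.sum_congr rfl fun i _ => ?_
  simp [heval]

/-- A `C¹` local diffeomorphism of the open ball into itself that fixes the sphere pointwise is onto:
its image is open, and closed relative to the ball. -/
lemma image_ball_eq {h : E → E} (hc : ∀ x ∈ closedBall (0 : E) 1, ContDiffAt ℝ 1 h x)
    (hdet : ∀ x ∈ ball (0 : E) 1, (fderiv ℝ h x).det ≠ 0)
    (hmaps : MapsTo h (ball 0 1) (ball 0 1)) (hid : ∀ x ∈ sphere (0 : E) 1, h x = x) :
    h '' ball 0 1 = ball 0 1 := by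
  refine hmaps.image_subset.antisymm ?_
  have hopen : IsOpen (h '' ball 0 1) := by
    rw [isOpen_iff_mem_nhds]
    rintro _ ⟨x, hx, rfl⟩
    have hs := (hc x (ball_subset_closedBall hx)).hasStrictFDerivAt one_ne_zero
    rw [← ContinuousLinearMap.coe_toContinuousLinearEquivOfDetNeZero _ (hdet x hx)] at hs
    rw [← hs.map_nhds_eq_of_equiv]
    exact Filter.image_mem_map (isOpen_ball.mem_nhds hx)
  have hcont : ContinuousOn h (closedBall 0 1) := fun x hx =>
    (hc x hx).continuousAt.continuousWithinAt
  refine (convex_ball (0 : E) 1).isPreconnected.subset_of_closure_inter_subset hopen ?_ ?_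
  · have h0 : (0 : E) ∈ ball (0 : E) 1 := mem_ball_self one_pos
    exact ⟨h 0, hmaps h0, mem_image_of_mem h h0⟩
  · rintro y ⟨hy, hyb⟩
    have hcl : closure (h '' ball 0 1) ⊆ h '' closedBall 0 1 :=
      closure_minimal (image_mono ball_subset_closedBall)
        ((isCompact_closedBall (0 : E) 1).image_of_continuousOn hcont).isClosed
    obtain ⟨x, hx, rfl⟩ := hcl hy
    refine mem_image_of_mem h ?_
    rcases (mem_closedBall.1 hx).lt_or_eq with hlt | heq
    · exact hlt
    · rwa [hid x heq] at hyb

/-- Smooth approximation: each `x` only asks for a value in the unit ball that is closer to `f x`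
than `x` is. These are convex conditions, so a partition of unity glues local constant choices. -/
lemma exists_contDiff_no_fixed (f : E → E) (hf : Continuous f) (hb : ∀ x, ‖f x‖ ≤ 1)
    (hfix : ∀ x, f x ≠ x) :
    ∃ g : E → E, ContDiff ℝ 1 g ∧ (∀ x, ‖g x‖ ≤ 1) ∧ ∀ x, g x ≠ x := by
  obtain ⟨g, hg⟩ := exists_contMDiffMap_forall_mem_convex_of_local_const (n := 1)
    (modelWithCornersSelf ℝ E) (F := E)
    (t := fun x => closedBall 0 1 ∩ ball (f x) (dist x (f x)))
    (fun x => (convex_closedBall _ _).inter (convex_ball _ _)) (fun x => by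
      refine ⟨f x, ?_⟩
      have hopen : IsOpen {y | dist (f x) (f y) < dist y (f y)} :=
        isOpen_lt (continuous_const.dist hf) (continuous_id.dist hf)
      filter_upwards [hopen.mem_nhds (by simpa using (hfix x).symm)] with y hy
      exact ⟨by simpa using hb x, hy⟩)
  refine ⟨g, g.contMDiff.contDiff, fun x => by simpa using (hg x).1, fun x hx => ?_⟩
  have := (hg x).2
  rw [hx, mem_ball] at this
  exact lt_irrefl _ this

/-- The metric projection onto a closed convex set, given by its variational characterization. -/
lemma exists_proj {K : Set E} (hne : K.Nonempty) (hK : IsClosed K) (hconv : Convex ℝ K) :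
    ∃ P : E → E, Continuous P ∧ (∀ x, P x ∈ K) ∧
      ∀ x, ∀ y ∈ K, inner ℝ (x - P x) (y - P x) ≤ 0 := by
  have hex : ∀ x, ∃ v ∈ K, ∀ y ∈ K, inner ℝ (x - v) (y - v) ≤ 0 := fun x => by
    obtain ⟨v, hv, hmin⟩ := exists_norm_eq_iInf_of_complete_convex hne hK.isComplete hconv x
    exact ⟨v, hv, (norm_eq_iInf_iff_real_inner_le_zero hconv hv).1 hmin⟩
  choose P hPK hP using hex
  refine ⟨P, ?_, hPK, hP⟩
  refine (LipschitzWith.of_dist_le_mul (K := 1) fun x y => ?_).continuous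
  rw [NNReal.coe_one, one_mul, dist_eq_norm, dist_eq_norm]
  have h1 := hP x (P y) (hPK y)
  have h2 := hP y (P x) (hPK x)
  -- Adding the two variational inequalities bounds `‖P x - P y‖²` by `⟪x - y, P x - P y⟫`.
  have h3 : ‖P x - P y‖ ^ 2 ≤ inner ℝ (x - y) (P x - P y) := by
    have e1 : inner ℝ (x - P x) (P y - P x) = - inner ℝ (x - P x) (P x - P y) := by
      rw [← inner_neg_right, neg_sub]
    have e2 : inner ℝ (x - y) (P x - P y) = inner ℝ (x - P x) (P x - P y)
        - inner ℝ (y - P y) (P x - P y) + inner ℝ (P x - P y) (P x - P y) := by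
      rw [← inner_sub_left, ← inner_add_left]; congr 1; abel
    rw [e2, real_inner_self_eq_norm_sq]
    linarith
  have h4 := real_inner_le_norm (x - y) (P x - P y)
  by_contra! hlt
  nlinarith [norm_nonneg (x - y), norm_nonneg (P x - P y)]

variable [MeasurableSpace E] [BorelSpace E]

/-- There is no `C¹` retraction of the closed unit ball onto its boundary sphere. -/
lemma no_retraction (r : E → E) (hr : ∀ x ∈ closedBall (0 : E) 1, ContDiffAt ℝ 1 r x)
    (h1 : ∀ x ∈ closedBall (0 : E) 1, ‖r x‖ = 1) (h2 : ∀ x ∈ sphere (0 : E) 1, r x = x) :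
    False := by
  set g : E → E := fun x => r x - x with hg
  have hgc : ∀ x ∈ closedBall (0 : E) 1, ContDiffAt ℝ 1 g x := fun x hx =>
    (hr x hx).sub contDiffAt_id
  have hcomp := isCompact_closedBall (0 : E) 1
  obtain ⟨K, hK⟩ : ∃ K, LipschitzOnWith K g (closedBall 0 1) :=
    ContDiffOn.exists_lipschitzOnWith (n := 1)
      (fun x hx => (hgc x hx).contDiffWithinAt) one_ne_zero (convex_closedBall _ _) hcomp
  have hA : ContinuousOn (fderiv ℝ g) (closedBall 0 1) := fun x hx =>
    ((hgc x hx).fderiv_right (m := 0) (by norm_num)).continuousAt.continuousWithinAt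
  obtain ⟨C, hC⟩ := hcomp.exists_bound_of_continuousOn hA
  have hdetc : Continuous fun B : E →L[ℝ] E => (1 + B).det :=
    ContinuousLinearMap.continuous_det.comp (continuous_const.add continuous_id)
  obtain ⟨δ, hδ, hδdet⟩ : ∃ δ > 0, ∀ B : E →L[ℝ] E, ‖B‖ < δ → 0 < (1 + B).det := by
    have h0 : {B : E →L[ℝ] E | 0 < (1 + B).det} ∈ 𝓝 0 := by
      refine (isOpen_lt continuous_const hdetc).mem_nhds ?_
      simp [ContinuousLinearMap.det, ContinuousLinearMap.one_def]
    obtain ⟨δ, hδ, hsub⟩ := Metric.mem_nhds_iff.1 h0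
    exact ⟨δ, hδ, fun B hB => hsub (by simpa using hB)⟩
  have hder : ∀ t : ℝ, ∀ x ∈ closedBall (0 : E) 1,
      HasFDerivAt (fun y => y + t • g y) (1 + t • fderiv ℝ g x) x := fun t x hx =>
    (hasFDerivAt_id x).add (((hgc x hx).differentiableAt one_ne_zero).hasFDerivAt.const_smul t)
  have hint : ∀ t : ℝ, IntegrableOn (fun x => (1 + t • fderiv ℝ g x).det) (ball 0 1) := by
    intro t
    refine IntegrableOn.mono_set ?_ ball_subset_closedBall
    exact (hdetc.comp_continuousOn (hA.const_smul t)).integrableOn_compact hcomp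
  -- For small `t` the map `x ↦ x + t g(x)` is a bijection of the ball with positive Jacobian.
  have hsmall : ∃ ε > 0, ∀ t ∈ Ioo (0 : ℝ) ε,
      ∫ x in ball (0 : E) 1, (1 + t • fderiv ℝ g x).det = volume.real (ball (0 : E) 1) := by
    have hC' : 0 < |C| + 1 := by positivity
    have hK' : 0 < (K : ℝ) + 1 := by positivity
    refine ⟨min 1 (min (δ / (|C| + 1)) (1 / (K + 1))), by positivity, fun t ⟨ht0, ht⟩ => ?_⟩
    rw [lt_min_iff, lt_min_iff, lt_div_iff₀ hC', lt_div_iff₀ hK'] at ht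
    obtain ⟨ht1, htC, htK⟩ := ht
    have hpos : ∀ x ∈ closedBall (0 : E) 1, 0 < (1 + t • fderiv ℝ g x).det := by
      intro x hx
      refine hδdet _ ?_
      rw [norm_smul, Real.norm_of_nonneg ht0.le]
      have := hC x hx
      nlinarith [le_abs_self C]
    have himg : (fun y => y + t • g y) '' ball (0 : E) 1 = ball 0 1 := by
      refine image_ball_eq (fun x hx => contDiffAt_id.add ((hgc x hx).const_smul t)) ?_ ?_ ?_
      · intro x hx
        rw [(hder t x (ball_subset_closedBall hx)).fderiv]
        exact (hpos x (ball_subset_closedBall hx)).ne'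
      · intro x hx
        have hrx := h1 x (ball_subset_closedBall hx)
        rw [mem_ball_zero_iff] at hx ⊢
        calc ‖x + t • g x‖ = ‖(1 - t) • x + t • r x‖ := by
              congr 1; simp only [hg]; module
          _ ≤ ‖(1 - t) • x‖ + ‖t • r x‖ := norm_add_le _ _
          _ = (1 - t) * ‖x‖ + t := by
              rw [norm_smul, norm_smul, hrx, Real.norm_of_nonneg ht0.le,
                Real.norm_of_nonneg (by linarith), mul_one]
          _ < 1 := by nlinarith
      · intro x hx
        simp [hg, h2 x hx]
    have hinj : InjOn (fun y => y + t • g y) (ball (0 : E) 1) := by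
      intro x hx y hy hxy
      have hl := hK.norm_sub_le (ball_subset_closedBall hx) (ball_subset_closedBall hy)
      have hxy' : x - y = -(t • (g x - g y)) := by
        simp only at hxy
        rw [smul_sub, neg_sub, sub_eq_sub_iff_add_eq_add, hxy, add_comm]
      have hn : ‖x - y‖ = t * ‖g x - g y‖ := by
        rw [hxy', norm_neg, norm_smul, Real.norm_of_nonneg ht0.le]
      have : ‖x - y‖ = 0 := by
        by_contra hne
        have : 0 < ‖x - y‖ := lt_of_le_of_ne (norm_nonneg _) (Ne.symm hne)
        nlinarith
      exact sub_eq_zero.1 (norm_eq_zero.1 this)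
    have hcv := integral_image_eq_integral_abs_det_fderiv_smul (volume : Measure E)
      measurableSet_ball
      (fun x hx => (hder t x (ball_subset_closedBall hx)).hasFDerivWithinAt) hinj
      (fun _ => (1 : ℝ))
    rw [himg] at hcv
    have hcong : ∫ x in ball (0 : E) 1, (1 + t • fderiv ℝ g x).det =
        ∫ x in ball (0 : E) 1, |(1 + t • fderiv ℝ g x).det| • (1 : ℝ) :=
      setIntegral_congr_fun measurableSet_ball fun x hx => by
        simp [abs_of_pos (hpos x (ball_subset_closedBall hx))]
    rw [hcong, ← hcv]
    simp
  obtain ⟨ε, hε, hvol⟩ := hsmall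
  obtain ⟨s, hs, hcard⟩ := (Ioo_infinite hε).exists_subset_card_eq (Module.finrank ℝ E + 1)
  -- Interpolating at nodes in `(0, ε)` carries the identity over to `t = 1`.
  have hone : ∫ x in ball (0 : E) 1, (1 + (1 : ℝ) • fderiv ℝ g x).det =
      volume.real (ball (0 : E) 1) := by
    have hne : s.Nonempty := Finset.card_pos.1 (by omega)
    simp_rw [fun x => det_one_add_smul_eq_sum s (by omega) (fderiv ℝ g x) 1]
    rw [integral_finsetSum _ fun i _ => (hint i).mul_const _]
    simp_rw [integral_mul_const]
    rw [Finset.sum_congr rfl fun i hi => by rw [hvol i (hs hi)], ← Finset.mul_sum,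
      ← Polynomial.eval_finsetSum, Lagrange.sum_basis Function.injective_id.injOn hne]
    simp
  have hzero : ∫ x in ball (0 : E) 1, (1 + (1 : ℝ) • fderiv ℝ g x).det = 0 := by
    refine setIntegral_eq_zero_of_forall_eq_zero fun x hx => ?_
    -- Differentiating `⟪r, r⟫ = 1` shows that the range of the derivative is orthogonal to `r x ≠ 0`.
    by_contra hdet
    have hd := hder 1 x (ball_subset_closedBall hx)
    have hrg : (fun y => y + (1 : ℝ) • g y) = r := by ext y; simp [hg]
    rw [hrg] at hd
    set L := 1 + (1 : ℝ) • fderiv ℝ g x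
    have hn : HasFDerivAt (fun y => inner ℝ (r y) (r y)) (0 : E →L[ℝ] ℝ) x := by
      refine (hasFDerivAt_const (1 : ℝ) x).congr_of_eventuallyEq ?_
      filter_upwards [isOpen_ball.mem_nhds hx] with y hy
      rw [real_inner_self_eq_norm_sq, h1 y (ball_subset_closedBall hy), one_pow]
    have hu := hn.unique (hd.inner ℝ hd)
    have happ := congrArg (fun φ : E →L[ℝ] ℝ =>
      φ ((L.toContinuousLinearEquivOfDetNeZero hdet).symm (r x))) hu
    have hL : L ((L.toContinuousLinearEquivOfDetNeZero hdet).symm (r x)) = r x := by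
      rw [← ContinuousLinearMap.toContinuousLinearEquivOfDetNeZero_apply L hdet,
        ContinuousLinearEquiv.apply_symm_apply]
    simp [hL, fderivInnerCLM_apply, h1 x (ball_subset_closedBall hx)] at happ
    norm_num at happ
  rw [hzero] at hone
  exact (measure_ball_pos (volume : Measure E) 0 one_pos).ne'
    ((measureReal_eq_zero_iff measure_ball_lt_top.ne).1 hone.symm)

/-- Brouwer's fixed point theorem, for maps defined on the whole space with values in the closed unit
ball. -/
lemma brouwer (f : E → E) (hf : Continuous f) (hb : ∀ x, ‖f x‖ ≤ 1) : ∃ x, f x = x := by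
  by_contra! hfix
  obtain ⟨g, hgc, hgb, hgfix⟩ := exists_contDiff_no_fixed f hf hb hfix
  set u : E → E := fun x => x - g x with hu
  have huc : ContDiff ℝ 1 u := contDiff_id.sub hgc
  have hu0 : ∀ x, ‖u x‖ ^ 2 ≠ 0 := fun x => by
    simpa [hu, sub_eq_zero] using (hgfix x).symm
  -- The half-line from `g x` through `x` meets the sphere at `x + lam x • u x`, where `lam x` is the
  -- larger root of a quadratic equation with reduced discriminant `D x`.
  set D : E → ℝ := fun x => inner ℝ x (u x) ^ 2 + ‖u x‖ ^ 2 * (1 - ‖x‖ ^ 2) with hD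
  have hsphere : ∀ x : E, ‖x‖ = 1 → 0 < inner ℝ x (u x) := by
    intro x hx
    have hlt : inner ℝ x (g x) < 1 := by
      refine lt_of_le_of_ne ?_ fun heq => hgfix x ?_
      · nlinarith [real_inner_le_norm x (g x), hgb x, norm_nonneg (g x)]
      · have hsq : ‖g x - x‖ ^ 2 = ‖g x‖ ^ 2 - 1 := by
          rw [norm_sub_sq_real, real_inner_comm, heq, hx]; ring
        have : ‖g x - x‖ = 0 := by
          have h3 : ‖g x‖ ^ 2 ≤ 1 := pow_le_one₀ (norm_nonneg _) (hgb x)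
          exact pow_eq_zero_iff two_ne_zero |>.1 (le_antisymm (by linarith) (sq_nonneg _))
        exact sub_eq_zero.1 (norm_eq_zero.1 this)
    simp only [hu, inner_sub_right, real_inner_self_eq_norm_sq, hx]
    linarith
  have hDpos : ∀ x ∈ closedBall (0 : E) 1, 0 < D x := by
    intro x hx
    rw [mem_closedBall_zero_iff] at hx
    have hupos : 0 < ‖u x‖ ^ 2 := lt_of_le_of_ne (sq_nonneg _) (hu0 x).symm
    rcases hx.lt_or_eq with hlt | heq
    · have : 0 < 1 - ‖x‖ ^ 2 := by nlinarith [norm_nonneg x]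
      simp only [hD]
      positivity
    · have := hsphere x heq
      simp only [hD, heq]
      nlinarith
  set lam : E → ℝ := fun x => (-inner ℝ x (u x) + √(D x)) / ‖u x‖ ^ 2 with hlam
  refine no_retraction (fun x => x + lam x • u x) ?_ ?_ ?_
  · intro x hx
    have hDc : ContDiff ℝ 1 D :=
      ((contDiff_id.inner ℝ huc).pow 2).add
        ((huc.norm_sq ℝ).mul (contDiff_const.sub (contDiff_id.norm_sq ℝ)))
    have hlc : ContDiffAt ℝ 1 lam x :=
      ((contDiff_id.inner ℝ huc).neg.contDiffAt.add
        (hDc.contDiffAt.sqrt (hDpos x hx).ne')).div (huc.norm_sq ℝ).contDiffAt (hu0 x)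
    exact contDiffAt_id.add (hlc.smul huc.contDiffAt)
  · intro x hx
    have hs : √(D x) ^ 2 = D x := Real.sq_sqrt (hDpos x hx).le
    have hl : lam x * ‖u x‖ ^ 2 = -inner ℝ x (u x) + √(D x) := div_mul_cancel₀ _ (hu0 x)
    have hsq : ‖x + lam x • u x‖ ^ 2 = 1 := by
      rw [norm_add_sq_real, real_inner_smul_right, norm_smul, mul_pow, Real.norm_eq_abs, sq_abs]
      refine mul_right_cancel₀ (hu0 x) ?_
      have hDx : D x = inner ℝ x (u x) ^ 2 + ‖u x‖ ^ 2 * (1 - ‖x‖ ^ 2) := rfl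
      have hs' : (lam x * ‖u x‖ ^ 2 + inner ℝ x (u x)) ^ 2 = D x := by
        rw [hl, neg_add_cancel_comm, hs]
      linear_combination hs' + hDx
    exact (pow_eq_one_iff_of_nonneg (norm_nonneg _) two_ne_zero).1 hsq
  · intro x hx
    rw [mem_sphere_zero_iff_norm] at hx
    have : lam x = 0 := by
      simp [hlam, hD, hx, Real.sqrt_sq (hsphere x hx).le]
    simp [this]

/-- The Hartman–Stampacchia theorem on variational inequalities over a compact convex set. -/
lemma exists_variational {K : Set E} (hne : K.Nonempty) (hK : IsCompact K) (hconv : Convex ℝ K)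
    (F : E → E) (hF : ContinuousOn F K) : ∃ x ∈ K, ∀ y ∈ K, inner ℝ (F x) (y - x) ≤ 0 := by
  obtain ⟨P, hPc, hPK, hP⟩ := exists_proj hne hK.isClosed hconv
  obtain ⟨R, hR0, hR⟩ := hK.isBounded.exists_pos_norm_le
  have hFP : Continuous fun x => F (P x) := hF.comp_continuous hPc hPK
  -- The set `K` lies in the ball of radius `R`; rescaling brings it into the unit ball.
  obtain ⟨z, hz⟩ := brouwer (fun x => R⁻¹ • P (P (R • x) + F (P (R • x))))
    ((hPc.comp ((hPc.add hFP).comp (continuous_const_smul R))).const_smul R⁻¹) (fun x => by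
      rw [norm_smul, norm_inv, Real.norm_of_nonneg hR0.le, inv_mul_le_one₀ hR0]
      exact hR _ (hPK _))
  rw [inv_smul_eq_iff₀ hR0.ne'] at hz
  have hxK : R • z ∈ K := hz ▸ hPK _
  have hPx : P (R • z) = R • z := by
    have := hP (R • z) (R • z) hxK
    rw [real_inner_self_nonpos, sub_eq_zero] at this
    exact this.symm
  rw [hPx] at hz
  refine ⟨R • z, hxK, fun y hy => ?_⟩
  have := hP (R • z + F (R • z)) y hy
  rwa [hz, add_sub_cancel_left] at this

end Brouwer

/-! ### The power control game -/

namespace GameData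

variable {Q N : ℕ} (G : GameData Q N)

lemma convex_stratSet (q : Fin Q) : Convex ℝ (G.stratSet q) := by
  rintro x ⟨hx, hxs⟩ y ⟨hy, hys⟩ a b ha hb hab
  refine ⟨fun k => ⟨?_, ?_⟩, ?_⟩
  · have := (hx k).1
    have := (hy k).1
    simp only [Pi.add_apply, Pi.smul_apply, smul_eq_mul]
    positivity
  · have hle : (a • x + b • y) k ≤ max (x k) (y k) :=
      Convex.combo_le_max (x k) (y k) ha hb hab
    refine (ENNReal.ofReal_le_ofReal hle).trans ?_
    rcases max_choice (x k) (y k) with h | h <;> rw [h]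
    exacts [(hx k).2, (hy k).2]
  · simp only [Pi.add_apply, Pi.smul_apply, smul_eq_mul, Finset.sum_add_distrib,
      ← Finset.mul_sum]
    nlinarith

lemma isClosed_stratSet (q : Fin Q) : IsClosed (G.stratSet q) := by
  have h : G.stratSet q = (⋂ k, {p | 0 ≤ p k} ∩ {p | ENNReal.ofReal (p k) ≤ G.pmax q k}) ∩
      {p | (1 / (N : ℝ)) * ∑ k, p k ≤ 1} := by
    ext p; simp [stratSet]
  rw [h]
  refine (isClosed_iInter fun k => (isClosed_le continuous_const (continuous_apply k)).inter
    (isClosed_le (ENNReal.continuous_ofReal.comp (continuous_apply k)) continuous_const)).inter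
    (isClosed_le (by fun_prop) continuous_const)

/-- The set of feasible strategy profiles, as a subset of a Euclidean space indexed by pairs
(user, carrier). -/
def profileSet : Set (EuclideanSpace ℝ (Fin Q × Fin N)) :=
  { x | ∀ q, (fun k => x (q, k)) ∈ G.stratSet q }

lemma convex_profileSet : Convex ℝ G.profileSet := by
  intro x hx y hy a b ha hb hab q
  exact G.convex_stratSet q (hx q) (hy q) ha hb hab

lemma zero_mem_profileSet : 0 ∈ G.profileSet := by
  intro q
  simp [stratSet]

lemma isCompact_profileSet (hN : 1 ≤ N) : IsCompact G.profileSet := by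
  have hcl : IsClosed G.profileSet := by
    have : G.profileSet = ⋂ q, (fun x : EuclideanSpace ℝ (Fin Q × Fin N) => fun k => x (q, k)) ⁻¹'
        G.stratSet q := by
      ext x; simp [profileSet]
    rw [this]
    exact isClosed_iInter fun q => (G.isClosed_stratSet q).preimage (by fun_prop)
  refine IsCompact.of_isClosed_subset
    ((isCompact_Icc (a := (0 : Fin Q × Fin N → ℝ)) (b := fun _ => (N : ℝ))).image
      (PiLp.continuous_toLp 2 fun _ : Fin Q × Fin N => ℝ)) hcl ?_
  intro x hx
  refine ⟨WithLp.ofLp x, ⟨fun i => ((hx i.1).1 i.2).1, fun i => ?_⟩, rfl⟩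
  have hN' : (0 : ℝ) < N := by exact_mod_cast hN
  have hsum := (hx i.1).2
  rw [one_div, inv_mul_le_one₀ hN'] at hsum
  exact (Finset.single_le_sum (f := fun k => x (i.1, k))
    (fun k _ => ((hx i.1).1 k).1) (Finset.mem_univ i.2)).trans hsum

lemma one_le_interf {p : Fin Q → Fin N → ℝ} (hp : ∀ q k, 0 ≤ p q k) (q : Fin Q) (k : Fin N) :
    1 ≤ G.interf q p k := by
  have : 0 ≤ ∑ r ∈ Finset.univ.erase q, ‖G.chan r q k‖ ^ 2 * p r k :=
    Finset.sum_nonneg fun r _ => mul_nonneg (sq_nonneg _) (hp r k)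
  unfold interf
  linarith

lemma interf_update (p : Fin Q → Fin N → ℝ) (q : Fin Q) (y : Fin N → ℝ) (k : Fin N) :
    G.interf q (Function.update p q y) k = G.interf q p k := by
  unfold interf
  congr 1
  refine Finset.sum_congr rfl fun r hr => ?_
  rw [Function.update_of_ne (Finset.ne_of_mem_erase hr)]

/-- `N` times the partial derivative of the payoff of user `q` in the power `p q k`. -/
noncomputable def marginal (p : Fin Q → Fin N → ℝ) (q : Fin Q) (k : Fin N) : ℝ :=
  ‖G.chan q q k‖ ^ 2 / (G.gap q * G.interf q p k + ‖G.chan q q k‖ ^ 2 * p q k)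

/-- Concavity of the payoff of user `q` in that user's own strategy, as a first-order inequality. -/
lemma payoff_update_sub_le {p : Fin Q → Fin N → ℝ} (hp : ∀ q k, 0 ≤ p q k) (q : Fin Q)
    {y : Fin N → ℝ} (hy : ∀ k, 0 ≤ y k) :
    G.payoff q (Function.update p q y) - G.payoff q p ≤
      (1 / (N : ℝ)) * ∑ k, G.marginal p q k * (y k - p q k) := by
  unfold payoff
  rw [← mul_sub, ← Finset.sum_sub_distrib]
  refine mul_le_mul_of_nonneg_left (Finset.sum_le_sum fun k _ => ?_) (by positivity)
  rw [interf_update, Function.update_self]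
  have hI := G.one_le_interf hp q k
  have hΓ := G.one_le_gap q
  have hpk := hp q k
  have hyk := hy k
  set c := ‖G.chan q q k‖ ^ 2 with hc
  have hc0 : 0 ≤ c := sq_nonneg _
  unfold marginal
  rw [← hc]
  set I := G.interf q p k
  set Γ := G.gap q
  have hI0 : 0 < I := by linarith
  have hΓ0 : 0 < Γ := by linarith
  have hden : 0 < Γ * I + c * p q k := by positivity
  rw [← Real.log_div (by positivity) (by positivity)]
  refine (Real.log_le_sub_one_of_pos (by positivity)).trans (le_of_eq ?_)
  field_simp
  ring

lemma continuousOn_marginal : ContinuousOn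
    (fun x : EuclideanSpace ℝ (Fin Q × Fin N) =>
      (WithLp.toLp 2 fun i : Fin Q × Fin N => G.marginal (fun q k => x (q, k)) i.1 i.2 :
        EuclideanSpace ℝ (Fin Q × Fin N))) G.profileSet := by
  refine (PiLp.continuous_toLp 2 fun _ : Fin Q × Fin N => ℝ).comp_continuousOn ?_
  refine continuousOn_pi.2 fun i => ?_
  unfold marginal interf
  refine ContinuousOn.div (by fun_prop) (by fun_prop) fun x hx => ?_
  have hx0 : ∀ q k, 0 ≤ x (q, k) := fun q k => ((hx q).1 k).1
  have hI := G.one_le_interf (p := fun q k => x (q, k)) hx0 i.1 i.2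
  have hΓ := G.one_le_gap i.1
  have hm : 0 ≤ ‖G.chan i.1 i.1 i.2‖ ^ 2 * x (i.1, i.2) := mul_nonneg (sq_nonneg _) (hx0 _ _)
  unfold interf at hI
  refine ne_of_gt ?_
  nlinarith

end GameData

end NCGame

/-- **Theorem 2 (existence part).** Game `G` admits at least one Nash equilibrium, for every
choice of channel gains `H_rq(k)` with `H_qq(k) ≠ 0`, gap parameters `Γ_q ≥ 1`, and
spectral-mask limits `p_q^max(k) ∈ (0,∞]`. -/
theorem NCGame.existence_of_NE (Q N : ℕ) (hQ : 1 ≤ Q) (hN : 1 ≤ N)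
    (G : NCGame.GameData Q N) :
    ∃ p : Fin Q → Fin N → ℝ, G.isNE p := by
  obtain ⟨x, hx, hvi⟩ := NCGame.exists_variational ⟨0, G.zero_mem_profileSet⟩
    (G.isCompact_profileSet hN) G.convex_profileSet _ G.continuousOn_marginal
  set p : Fin Q → Fin N → ℝ := fun q k => x (q, k) with hp
  have hp0 : ∀ q k, 0 ≤ p q k := fun q k => ((hx q).1 k).1
  refine ⟨p, hx, fun q y hy => ?_⟩
  have hle := G.payoff_update_sub_le hp0 q fun k => (hy.1 k).1
  -- Test the variational inequality against the unilateral deviation of user `q` to `y`.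
  have hz := hvi (WithLp.toLp 2 fun i => Function.update p q y i.1 i.2) fun r => by
    by_cases hr : r = q
    · subst hr; simpa using hy
    · simpa [Function.update_of_ne hr] using hx r
  have hsum : ∑ k, G.marginal p q k * (y k - p q k) ≤ 0 := by
    refine le_trans (le_of_eq ?_) hz
    rw [PiLp.inner_apply, Fintype.sum_prod_type, Finset.sum_eq_single q]
    · refine Finset.sum_congr rfl fun k _ => ?_
      simp [hp, mul_comm]
    · intro r _ hr
      refine Finset.sum_eq_zero fun k _ => ?_
      simp [hp, Function.update_of_ne hr]
    · simp
  have : (1 / (N : ℝ)) * ∑ k, G.marginal p q k * (y k - p q k) ≤ 0 :=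
    mul_nonpos_of_nonneg_of_nonpos (by positivity) hsum
  linarith
end

section
/- Suppose Q ≥ 2 and Γ_q·|H_rq(k)|²/|H_qq(k)|² < 1/(Q−1) for every q, every r ≠ q, and every k ∈ {1,…,N}. Then Σ_{r≠q}[H(k)]_qr < 1 for every q and every k (condition C3 with unit weights); consequently ρ(H(k)) < 1 for every k and game G admits exactly one Nash equilibrium. The same conclusions hold under the stronger hypothesis Γ_q·|H_rq(k)|²/|H_qq(k)|² < 1/(2Q−3) for all q, r ≠ q, k. (Corollary 3: conditions C5 and C6 are sufficient for C3.) -/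
/-!
Fix the other users' powers and let `c k = Γ_q (1 + Σ_{r≠q} |H_rq(k)|² p_r(k)) / |H_qq(k)|²`.
User `q` maximizes `Σ log (1 + p k / c k)`. A power vector `p` is optimal iff it spends the whole
budget and satisfies the exchange condition: the level `c i + p i` of an unsaturated carrier `i`
is at least the level `c j + p j` of a used carrier `j`
(`full_power_of_opt`, `exchange_of_opt`, `Exchange.opt`). The same exchange condition is
the variational inequality characterizing `p` as the Euclidean projection of `-c` onto the
full-power face of the strategy set (`isProj_iff_exchange`). Hence the Nash equilibria are exactly
the fixed points of the map sending a profile to these projections.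

Projections are nonexpansive in the `ℓ²` norm over carriers (`IsProj.norm_sub_le`), and `-c`
depends on the profile with Lipschitz constant `(Q - 1) a` for the maximum over users of the `ℓ²`
norms, `a` being the largest normalized cross gain (`norm_lvl_sub_le`). Under the hypothesis
`(Q - 1) a < 1`, so Banach's theorem gives exactly one fixed point (`existsUnique_isNE`).
The row sums of `H(k)` are at most `(Q - 1) a`, and the spectral radius bound is Gershgorin's
theorem (`specRad_lt_one`).
-/

open scoped ENNReal

namespace NCGame

/-- Euclidean projection of `x` onto the interval `[0, b]`, where `b ∈ (0, ∞]`. -/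
noncomputable def proj (x : ℝ) (b : ℝ≥0∞) : ℝ :=
  if b = ⊤ then max 0 x else min b.toReal (max 0 x)

namespace GameData

variable {Q N : ℕ}

/-- `p` is an admissible strategy profile of the users other than `q` (the `q`-th component
is irrelevant). -/
def otherStrats (G : GameData Q N) (q : Fin Q) (p : Fin Q → Fin N → ℝ) : Prop :=
  ∀ r, r ≠ q → p r ∈ G.stratSet r

/-- `wf` is the waterfilling response `WF_q(p_{-q})` of user `q` to the strategies `p` of the
other users: there is a water level `μ` such that each component is the projection of
`μ − Γ_q (1 + Σ_{r≠q}|H_rq(k)|² p_r(k))/|H_qq(k)|²` onto `[0, p_q^max(k)]`, and the average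
power equals `1`. -/
def isWFResp (G : GameData Q N) (q : Fin Q) (p : Fin Q → Fin N → ℝ)
    (wf : Fin N → ℝ) : Prop :=
  (∃ μ : ℝ, ∀ k, wf k =
      proj (μ - G.gap q * G.interf q p k / ‖G.chan q q k‖ ^ 2) (G.pmax q k)) ∧
  (1 / (N : ℝ)) * ∑ k, wf k = 1

/-- The set `D_q` of carriers that user `q` can possibly use in a waterfilling best response
to some admissible strategy of the other users. -/
def Dset (G : GameData Q N) (q : Fin Q) : Set (Fin N) :=
  { k | ∃ p wf, G.otherStrats q p ∧ G.isWFResp q p wf ∧ wf k ≠ 0 }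

open Classical in
/-- The matrix `H(k)` of normalized cross-channel gains. -/
noncomputable def Hmat (G : GameData Q N) (k : Fin N) : Matrix (Fin Q) (Fin Q) ℝ :=
  fun q r =>
    if r ≠ q ∧ k ∈ G.Dset q ∧ k ∈ G.Dset r then
      G.gap q * ‖G.chan r q k‖ ^ 2 / ‖G.chan q q k‖ ^ 2
    else 0

end GameData

/-- Spectral radius of a real square matrix: the largest modulus of its (complex) spectrum. -/
noncomputable def specRad {Q : ℕ} (M : Matrix (Fin Q) (Fin Q) ℝ) : ℝ :=
  sSup ((fun z => ‖z‖) '' spectrum ℂ (M.map (Complex.ofReal ·)))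

end NCGame

namespace NCGame

/-! ### Single-user power allocation -/

/-- The polytope of powers `p` with `0 ≤ p ≤ b` and total power at most `B`. -/
def box {ι : Type*} [Fintype ι] (b : ι → ℝ) (B : ℝ) : Set (ι → ℝ) :=
  {p | (∀ k, 0 ≤ p k ∧ p k ≤ b k) ∧ ∑ k, p k ≤ B}

/-- The exchange condition: every used carrier `j` has level `f j` at most the level `f i` of
every unsaturated carrier `i`, so no transfer of power from `j` to `i` moves to a lower level. -/
def Exchange {ι : Type*} (b p f : ι → ℝ) : Prop :=
  ∀ i j, p i < b i → 0 < p j → f j ≤ f i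

section
variable {ι : Type*} [Fintype ι] {b p f c : ι → ℝ} {B : ℝ}

/-- Under the exchange condition there is a common water level `f m`, the largest level of a
used carrier. -/
lemma Exchange.exists_level (h : Exchange b p f) (hp : ∃ j, 0 < p j) :
    ∃ m, ∀ k, (p k < b k → f m ≤ f k) ∧ (0 < p k → f k ≤ f m) := by
  classical
  obtain ⟨j, hj⟩ := hp
  obtain ⟨m, hm, hmax⟩ := Finset.exists_max_image (Finset.univ.filter fun k => 0 < p k) f
    ⟨j, by simpa using hj⟩
  have hm' : 0 < p m := by simpa using hm
  exact ⟨m, fun k => ⟨fun hk => h k m hk hm', fun hk => hmax k (by simpa using hk)⟩⟩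

lemma exists_pos_of_sum (hB : 0 < B) (hs : ∑ k, p k = B) : ∃ j, 0 < p j := by
  by_contra! h
  have := Finset.sum_nonpos (s := Finset.univ) (f := p) fun k _ => h k
  linarith

lemma sum_update_add [DecidableEq ι] (F : ι → ℝ → ℝ) (i : ι) (x : ℝ) :
    ∑ k, F k (Function.update p i x k) = ∑ k, F k (p k) + (F i x - F i (p i)) := by
  rw [← Finset.add_sum_erase _ _ (Finset.mem_univ i),
    ← Finset.add_sum_erase _ (fun k => F k (p k)) (Finset.mem_univ i)]
  have : ∑ k ∈ Finset.univ.erase i, F k (Function.update p i x k)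
      = ∑ k ∈ Finset.univ.erase i, F k (p k) :=
    Finset.sum_congr rfl fun k hk => by
      rw [Function.update_of_ne (Finset.ne_of_mem_erase hk)]
  rw [this, Function.update_self]; ring

lemma sum_transfer [DecidableEq ι] (F : ι → ℝ → ℝ) {i j : ι} (hij : i ≠ j) (x y : ℝ) :
    ∑ k, F k (Function.update (Function.update p j y) i x k)
      = ∑ k, F k (p k) + (F j y - F j (p j)) + (F i x - F i (p i)) := by
  rw [sum_update_add, sum_update_add, Function.update_of_ne hij]

lemma transfer_mem [DecidableEq ι] (hp : p ∈ box b B) {i j : ι} (hij : i ≠ j) {t : ℝ}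
    (ht : 0 ≤ t) (hi : p i + t ≤ b i) (hj : t ≤ p j) :
    Function.update (Function.update p j (p j - t)) i (p i + t) ∈ box b B := by
  refine ⟨fun k => ?_, ?_⟩
  · rcases eq_or_ne k i with rfl | hki
    · have := hp.1 k
      simp only [Function.update_self]; constructor <;> linarith
    · rw [Function.update_of_ne hki]
      rcases eq_or_ne k j with rfl | hkj
      · have := hp.1 k
        simp only [Function.update_self]; constructor <;> linarith
      · rw [Function.update_of_ne hkj]; exact hp.1 k
  · have := sum_transfer (p := p) (fun _ x => x) hij (p i + t) (p j - t)
    have := hp.2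
    linarith

/-- First-order optimality of a full-power `p` for the linear functional `f` yields the
exchange condition. -/
lemma exchange_of_vi (hp : p ∈ box b B) (hs : ∑ k, p k = B)
    (h : ∀ w ∈ box b B, ∑ k, w k = B → 0 ≤ ∑ k, f k * (w k - p k)) : Exchange b p f := by
  classical
  intro i j hi hj
  rcases eq_or_ne i j with rfl | hij
  · exact le_rfl
  set t := min (b i - p i) (p j) with ht
  have ht0 : 0 < t := lt_min (by linarith) hj
  have h1 : t ≤ b i - p i := min_le_left _ _
  have h2 : t ≤ p j := min_le_right _ _
  have hv := h _ (transfer_mem hp hij ht0.le (by linarith) h2) (by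
    have := sum_transfer (p := p) (fun _ x => x) hij (p i + t) (p j - t)
    linarith)
  rw [sum_transfer (fun k x => f k * (x - p k)) hij] at hv
  simp only [sub_self, mul_zero, Finset.sum_const_zero] at hv
  have : 0 ≤ t * (f i - f j) := by linarith
  have := nonneg_of_mul_nonneg_right this ht0
  linarith

lemma Exchange.vi (h : Exchange b p f) (hB : 0 < B) (hs : ∑ k, p k = B) {w : ι → ℝ}
    (hw : w ∈ box b B) (hws : ∑ k, w k = B) : 0 ≤ ∑ k, f k * (w k - p k) := by
  obtain ⟨m, hm⟩ := h.exists_level (exists_pos_of_sum hB hs)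
  have : ∑ k, f m * (w k - p k) ≤ ∑ k, f k * (w k - p k) := by
    refine Finset.sum_le_sum fun k _ => ?_
    have := hw.1 k
    rcases lt_trichotomy (w k) (p k) with h | h | h
    · have := (hm k).2 (by linarith)
      nlinarith
    · simp [h]
    · have := (hm k).1 (by linarith)
      nlinarith
  rw [← Finset.mul_sum, Finset.sum_sub_distrib, hws, hs] at this
  linarith

/-- The exchange condition for the levels `c + p` makes `p` optimal: by concavity of `log`
and comparison of each level with the common water level. -/
lemma Exchange.opt (h : Exchange b p (c + p)) (hc : ∀ k, 0 < c k) (hB : 0 < B)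
    (hp : p ∈ box b B) (hs : ∑ k, p k = B) {w : ι → ℝ} (hw : w ∈ box b B) :
    ∑ k, Real.log (1 + w k / c k) ≤ ∑ k, Real.log (1 + p k / c k) := by
  obtain ⟨m, hm⟩ := h.exists_level (exists_pos_of_sum hB hs)
  simp only [Pi.add_apply] at hm
  have hpos : ∀ k, 0 < c k + p k := fun k => by linarith [hc k, (hp.1 k).1]
  have key : ∑ k, (Real.log (1 + w k / c k) - Real.log (1 + p k / c k))
      ≤ ∑ k, (w k - p k) / (c m + p m) := by
    refine Finset.sum_le_sum fun k _ => ?_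
    have hck := hc k
    have hfk := hpos k
    have hwk := hw.1 k
    have hwpos : 0 < c k + w k := by linarith
    have e1 : Real.log (1 + w k / c k) - Real.log (1 + p k / c k)
        = Real.log ((c k + w k) / (c k + p k)) := by
      rw [← Real.log_div]
      · congr 1; field_simp
      · have : 0 < 1 + w k / c k := by have := hwk.1; positivity
        exact this.ne'
      · have : 0 < 1 + p k / c k := by have := (hp.1 k).1; positivity
        exact this.ne'
    have e2 : Real.log ((c k + w k) / (c k + p k)) ≤ (w k - p k) / (c k + p k) := by
      have := Real.log_le_sub_one_of_pos (div_pos hwpos hfk)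
      have e : (c k + w k) / (c k + p k) - 1 = (w k - p k) / (c k + p k) := by
        field_simp; ring
      linarith
    rw [e1]
    refine e2.trans ?_
    rw [div_le_div_iff₀ hfk (hpos m)]
    rcases lt_trichotomy (w k) (p k) with h | h | h
    · have := (hm k).2 (by linarith)
      nlinarith
    · simp [h]
    · have := (hm k).1 (by linarith)
      nlinarith
  rw [Finset.sum_sub_distrib, ← Finset.sum_div, Finset.sum_sub_distrib, hs] at key
  have : (∑ k, w k - B) / (c m + p m) ≤ 0 :=
    div_nonpos_of_nonpos_of_nonneg (by linarith [hw.2]) (hpos m).le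
  linarith

/-- The caps sum to more than `B`, so unspent budget could be put on an unsaturated carrier. -/
lemma full_power_of_opt (hc : ∀ k, 0 < c k) (hb : B < ∑ k, b k) (hp : p ∈ box b B)
    (h : ∀ w ∈ box b B, ∑ k, Real.log (1 + w k / c k) ≤ ∑ k, Real.log (1 + p k / c k)) :
    ∑ k, p k = B := by
  classical
  by_contra hne
  have hlt : ∑ k, p k < B := lt_of_le_of_ne hp.2 hne
  obtain ⟨i, -, hi⟩ := Finset.exists_lt_of_sum_lt (hlt.trans hb)
  set t := min (b i - p i) (B - ∑ k, p k) with ht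
  have ht0 : 0 < t := lt_min (by linarith) (by linarith)
  have h1 : t ≤ b i - p i := min_le_left _ _
  have h2 : t ≤ B - ∑ k, p k := min_le_right _ _
  have hv := h (Function.update p i (p i + t)) ⟨fun k => by
      have := hp.1 k
      rcases eq_or_ne k i with rfl | hki
      · simp only [Function.update_self]; constructor <;> linarith
      · rw [Function.update_of_ne hki]; exact hp.1 k, by
      have := sum_update_add (p := p) (fun _ x => x) i (p i + t)
      linarith⟩
  rw [sum_update_add (fun k x => Real.log (1 + x / c k))] at hv
  have hci := hc i
  have : Real.log (1 + p i / c i) < Real.log (1 + (p i + t) / c i) := by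
    apply Real.log_lt_log
    · have := (hp.1 i).1; positivity
    · have : p i / c i < (p i + t) / c i := by gcongr; linarith
      linarith
  linarith

/-- Moving a little power from a used carrier to an unsaturated one of strictly lower level
`c + p` would increase the payoff. -/
lemma exchange_of_opt (hc : ∀ k, 0 < c k) (hp : p ∈ box b B)
    (h : ∀ w ∈ box b B, ∑ k, Real.log (1 + w k / c k) ≤ ∑ k, Real.log (1 + p k / c k)) :
    Exchange b p (c + p) := by
  classical
  intro i j hi hj
  rcases eq_or_ne i j with rfl | hij
  · exact le_rfl
  by_contra! hlt
  simp only [Pi.add_apply] at hlt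
  -- A transfer of less than the level gap strictly increases the product of the two levels.
  set t := min (min (b i - p i) (p j)) ((c j + p j - (c i + p i)) / 2) with ht
  have ht0 : 0 < t := lt_min (lt_min (by linarith) hj) (by linarith)
  have h1 : t ≤ b i - p i := (min_le_left _ _).trans (min_le_left _ _)
  have h2 : t ≤ p j := (min_le_left _ _).trans (min_le_right _ _)
  have h3 : t ≤ (c j + p j - (c i + p i)) / 2 := min_le_right _ _
  have hv := h _ (transfer_mem hp hij ht0.le (by linarith) h2)
  rw [sum_transfer (fun k x => Real.log (1 + x / c k)) hij] at hv
  have hci := hc i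
  have hcj := hc j
  have hpi := (hp.1 i).1
  have pos1 : 0 < 1 + p j / c j := by positivity
  have pos2 : 0 < 1 + p i / c i := by positivity
  have pos3 : 0 < 1 + (p j - t) / c j := by
    have : 0 ≤ p j - t := by linarith
    positivity
  have pos4 : 0 < 1 + (p i + t) / c i := by positivity
  have : Real.log ((1 + p j / c j) * (1 + p i / c i))
      < Real.log ((1 + (p j - t) / c j) * (1 + (p i + t) / c i)) := by
    apply Real.log_lt_log (by positivity)
    have e1 : (1 + p j / c j) * (1 + p i / c i) = (c j + p j) * (c i + p i) / (c j * c i) := by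
      field_simp
    have e2 : (1 + (p j - t) / c j) * (1 + (p i + t) / c i)
        = (c j + (p j - t)) * (c i + (p i + t)) / (c j * c i) := by
      field_simp
    rw [e1, e2]
    gcongr ?_ / _
    nlinarith
  rw [Real.log_mul pos1.ne' pos2.ne', Real.log_mul pos3.ne' pos4.ne'] at this
  linarith

end

/-! ### Projection onto the full-power face -/

/-- `v` is the Euclidean projection of `u` onto the full-power face `∑ k, v k = B` of `box b B`,
expressed by its variational inequality. -/
def IsProj {ι : Type*} [Fintype ι] (b : ι → ℝ) (B : ℝ) (u v : EuclideanSpace ℝ ι) : Prop :=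
  ((v : ι → ℝ) ∈ box b B ∧ ∑ k, v k = B) ∧
    ∀ w : EuclideanSpace ℝ ι, (w : ι → ℝ) ∈ box b B → ∑ k, w k = B →
      inner ℝ (u - v) (w - v) ≤ 0

lemma exists_proj_s4 {ι : Type*} [Fintype ι] {b : ι → ℝ} {B : ℝ} (hb0 : ∀ k, 0 ≤ b k)
    (hB : 0 < B) (hb : B < ∑ k, b k) (u : EuclideanSpace ℝ ι) :
    ∃ v, IsProj b B u v := by
  set K : Set (EuclideanSpace ℝ ι) := {v | (∀ k, 0 ≤ v k ∧ v k ≤ b k) ∧ ∑ k, v k = B} with hK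
  have hne : K.Nonempty := by
    have hS : 0 < ∑ k, b k := hB.trans hb
    refine ⟨WithLp.toLp 2 fun k => B / (∑ k, b k) * b k, fun k => ⟨?_, ?_⟩, ?_⟩
    · have := hb0 k
      simp only
      positivity
    · simp only
      exact mul_le_of_le_one_left (hb0 k) ((div_le_one hS).2 hb.le)
    · simp only
      rw [← Finset.mul_sum, div_mul_cancel₀ _ hS.ne']
  have hcl : IsClosed K := by
    have : K = (⋂ k, {v | 0 ≤ v k} ∩ {v | v k ≤ b k}) ∩ {v | ∑ k, v k = B} := by
      ext v; simp [hK]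
    rw [this]
    refine (isClosed_iInter fun k => ?_).inter (isClosed_eq (by fun_prop) (by fun_prop))
    exact (isClosed_le (by fun_prop) (by fun_prop)).inter
      (isClosed_le (by fun_prop) (by fun_prop))
  have hconv : Convex ℝ K := by
    intro x hx y hy s t hs ht hst
    refine ⟨fun k => ⟨?_, ?_⟩, ?_⟩
    · have := (hx.1 k).1
      have := (hy.1 k).1
      simp only [PiLp.add_apply, PiLp.smul_apply, smul_eq_mul]
      positivity
    · have h1 := mul_le_mul_of_nonneg_left (hx.1 k).2 hs
      have h2 := mul_le_mul_of_nonneg_left (hy.1 k).2 ht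
      simp only [PiLp.add_apply, PiLp.smul_apply, smul_eq_mul]
      calc _ ≤ s * b k + t * b k := add_le_add h1 h2
        _ = b k := by rw [← add_mul, hst, one_mul]
    · simp only [PiLp.add_apply, PiLp.smul_apply, smul_eq_mul]
      rw [Finset.sum_add_distrib, ← Finset.mul_sum, ← Finset.mul_sum, hx.2, hy.2, ← add_mul, hst,
        one_mul]
  obtain ⟨v, hv, hmin⟩ := exists_norm_eq_iInf_of_complete_convex hne hcl.isComplete hconv u
  rw [norm_eq_iInf_iff_real_inner_le_zero hconv hv] at hmin
  exact ⟨v, ⟨⟨hv.1, hv.2.le⟩, hv.2⟩, fun w hw hws => hmin w ⟨hw.1, hws⟩⟩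

/-- Projections are nonexpansive; for equal sources this also gives uniqueness. -/
lemma IsProj.norm_sub_le {ι : Type*} [Fintype ι] {b : ι → ℝ} {B : ℝ}
    {u v u' v' : EuclideanSpace ℝ ι} (h : IsProj b B u v) (h' : IsProj b B u' v') :
    ‖v - v'‖ ≤ ‖u - u'‖ := by
  have h1 := h.2 v' h'.1.1 h'.1.2
  have h2 := h'.2 v h.1.1 h.1.2
  have e : inner ℝ (u - v) (v' - v) + inner ℝ (u' - v') (v - v')
      = inner ℝ (v - v') (v - v') - inner ℝ (u - u') (v - v') := by
    simp only [inner_sub_left, inner_sub_right]; ring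
  have h3 := real_inner_le_norm (u - u') (v - v')
  rw [real_inner_self_eq_norm_sq] at e
  by_contra! hlt
  have := norm_nonneg (u - u')
  nlinarith

lemma isProj_iff_exchange {ι : Type*} [Fintype ι] {b : ι → ℝ} {B : ℝ} (hB : 0 < B)
    {c : ι → ℝ} {v : EuclideanSpace ℝ ι} :
    IsProj b B (WithLp.toLp 2 (-c)) v ↔
      ((v : ι → ℝ) ∈ box b B ∧ ∑ k, v k = B) ∧ Exchange b v (c + v) := by
  have key : ∀ w : EuclideanSpace ℝ ι, inner ℝ (WithLp.toLp 2 (-c) - v) (w - v)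
      = - ∑ k, (c + (v : ι → ℝ)) k * (w k - v k) := by
    intro w
    rw [PiLp.inner_apply, ← Finset.sum_neg_distrib]
    refine Finset.sum_congr rfl fun k _ => ?_
    simp
    ring
  constructor
  · rintro ⟨hv, h⟩
    refine ⟨hv, exchange_of_vi hv.1 hv.2 fun w hw hws => ?_⟩
    have := h (WithLp.toLp 2 w) hw hws
    rw [key] at this
    simpa using this
  · rintro ⟨hv, h⟩
    refine ⟨hv, fun w hw hws => ?_⟩
    rw [key]
    have := h.vi hB hv.2 hw hws
    linarith

/-! ### Equilibria as fixed points -/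

namespace GameData

variable {Q N : ℕ}

/-- Real-valued spectral mask: limits above the total budget `N` never bind, so they may be
truncated at `N + 1`. -/
noncomputable def cap (G : GameData Q N) (q : Fin Q) (k : Fin N) : ℝ :=
  (min (G.pmax q k) ((N : ℝ≥0∞) + 1)).toReal

/-- Normalized interference-plus-noise `Γ_q (1 + Σ_{r≠q} |H_rq(k)|² p_r(k)) / |H_qq(k)|²`. -/
noncomputable def lvl (G : GameData Q N) (q : Fin Q) (p : Fin Q → Fin N → ℝ) : Fin N → ℝ :=
  fun k => G.gap q * G.interf q p k / ‖G.chan q q k‖ ^ 2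

lemma cap_nonneg (G : GameData Q N) (q : Fin Q) (k : Fin N) : 0 ≤ G.cap q k :=
  ENNReal.toReal_nonneg

lemma le_cap_iff (G : GameData Q N) (q : Fin Q) (k : Fin N) {x : ℝ} (hx : x ≤ N) :
    x ≤ G.cap q k ↔ ENNReal.ofReal x ≤ G.pmax q k := by
  have htop : min (G.pmax q k) ((N : ℝ≥0∞) + 1) ≠ ⊤ :=
    ne_top_of_le_ne_top (by simp) (min_le_right _ _)
  rw [cap, ← ENNReal.ofReal_le_iff_le_toReal htop, le_min_iff, and_iff_left]
  calc ENNReal.ofReal x ≤ ENNReal.ofReal N := ENNReal.ofReal_le_ofReal hx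
    _ = N := ENNReal.ofReal_natCast N
    _ ≤ N + 1 := le_self_add

lemma stratSet_eq (G : GameData Q N) (hN : 1 ≤ N) (q : Fin Q) :
    G.stratSet q = box (G.cap q) N := by
  have hN' : (0 : ℝ) < N := by exact_mod_cast hN
  ext p
  have hs : (1 / (N : ℝ)) * ∑ k, p k ≤ 1 ↔ ∑ k, p k ≤ N := by
    rw [one_div, inv_mul_le_iff₀ hN', mul_one]
  simp only [stratSet, box, Set.mem_ofPred_eq, hs]
  refine and_congr_left fun hsum => ?_
  have aux (h0 : ∀ k, 0 ≤ p k) (k : Fin N) : p k ≤ N :=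
    (Finset.single_le_sum (fun i _ => h0 i) (Finset.mem_univ k)).trans hsum
  exact ⟨fun h k => ⟨(h k).1, (G.le_cap_iff q k (aux (fun k => (h k).1) k)).2 (h k).2⟩,
    fun h k => ⟨(h k).1, (G.le_cap_iff q k (aux (fun k => (h k).1) k)).1 (h k).2⟩⟩

lemma lt_sum_cap (G : GameData Q N) (hN : 1 ≤ N) (q : Fin Q)
    (h : (1 : ℝ≥0∞) < (1 / (N : ℝ≥0∞)) * ∑ k, G.pmax q k) : (N : ℝ) < ∑ k, G.cap q k := by
  by_cases hk : ∃ k, (N : ℝ≥0∞) + 1 ≤ G.pmax q k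
  · obtain ⟨k, hk⟩ := hk
    have h1 : G.cap q k = N + 1 := by
      rw [cap, min_eq_right hk, ENNReal.toReal_add (by simp) (by simp)]; simp
    have := Finset.single_le_sum (fun i _ => G.cap_nonneg q i) (Finset.mem_univ k)
    linarith
  · push Not at hk
    have hne : ∀ k, G.pmax q k ≠ ⊤ := fun k => (hk k).ne_top
    have h1 : ∑ k, G.cap q k = (∑ k, G.pmax q k).toReal := by
      rw [ENNReal.toReal_sum fun k _ => hne k]
      exact Finset.sum_congr rfl fun k _ => by rw [cap, min_eq_left (hk k).le]
    have h2 : (N : ℝ≥0∞) < ∑ k, G.pmax q k := by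
      have hN0 : (N : ℝ≥0∞) ≠ 0 := by simp; omega
      rw [one_div, mul_comm, ← div_eq_mul_inv] at h
      have := (ENNReal.lt_div_iff_mul_lt (Or.inl hN0) (Or.inl (by simp))).1 h
      simpa using this
    rw [h1, ← ENNReal.toReal_natCast]
    exact (ENNReal.toReal_lt_toReal (by simp) (ENNReal.sum_ne_top.2 fun k _ => hne k)).2 h2

lemma lvl_pos (G : GameData Q N) (q : Fin Q) {p : Fin Q → Fin N → ℝ}
    (hp : ∀ r k, 0 ≤ p r k) (k : Fin N) : 0 < G.lvl q p k := by
  have h1 : 0 < G.interf q p k := by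
    have : 0 ≤ ∑ r ∈ Finset.univ.erase q, ‖G.chan r q k‖ ^ 2 * p r k :=
      Finset.sum_nonneg fun r _ => mul_nonneg (by positivity) (hp r k)
    unfold interf
    linarith
  have h2 : 0 < G.gap q := by linarith [G.one_le_gap q]
  have h3 : 0 < ‖G.chan q q k‖ := norm_pos_iff.2 (G.chan_diag_ne q k)
  unfold lvl
  positivity

lemma payoff_update (G : GameData Q N) (q : Fin Q) (p : Fin Q → Fin N → ℝ) (w : Fin N → ℝ) :
    G.payoff q (Function.update p q w) =
      (1 / (N : ℝ)) * ∑ k, Real.log (1 + w k / G.lvl q p k) := by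
  unfold payoff
  congr 1
  refine Finset.sum_congr rfl fun k _ => ?_
  have hI : G.interf q (Function.update p q w) k = G.interf q p k := by
    unfold interf
    congr 1
    exact Finset.sum_congr rfl fun r hr => by
      rw [Function.update_of_ne (Finset.ne_of_mem_erase hr)]
  rw [hI, Function.update_self, lvl, div_div_eq_mul_div, one_div, ← div_div]
  congr 2
  rw [inv_mul_eq_div]
  ring

lemma isNE_iff (G : GameData Q N) (hN : 1 ≤ N)
    (hb : ∀ q, (N : ℝ) < ∑ k, G.cap q k) (p : Fin Q → Fin N → ℝ) :
    G.isNE p ↔ ∀ q, (p q ∈ box (G.cap q) N ∧ ∑ k, p q k = N) ∧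
      Exchange (G.cap q) (p q) (G.lvl q p + p q) := by
  have hN' : (0 : ℝ) < N := by exact_mod_cast hN
  have hpay (q : Fin Q) (w : Fin N → ℝ) :
      G.payoff q (Function.update p q w) ≤ G.payoff q p ↔
        ∑ k, Real.log (1 + w k / G.lvl q p k) ≤ ∑ k, Real.log (1 + p q k / G.lvl q p k) := by
    have h2 := G.payoff_update q p (p q)
    rw [Function.update_eq_self] at h2
    rw [G.payoff_update, h2]
    exact mul_le_mul_iff_right₀ (by positivity)
  simp only [isNE, G.stratSet_eq hN, hpay]
  constructor
  · rintro ⟨hp, h⟩ q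
    have hc := G.lvl_pos q (p := p) fun r k => ((hp r).1 k).1
    exact ⟨⟨hp q, full_power_of_opt hc (hb q) (hp q) (h q)⟩, exchange_of_opt hc (hp q) (h q)⟩
  · intro h
    refine ⟨fun q => (h q).1.1, fun q w hw => ?_⟩
    exact (h q).2.opt (G.lvl_pos q fun r k => ((h r).1.1.1 k).1) hN' (h q).1.1 (h q).1.2 hw

/-- Lipschitz bound for the normalized interference, when all normalized cross gains are at
most `a`. -/
lemma norm_lvl_sub_le (G : GameData Q N) (q : Fin Q) {a : ℝ}
    (ha : ∀ r k, r ≠ q → G.gap q * ‖G.chan r q k‖ ^ 2 / ‖G.chan q q k‖ ^ 2 ≤ a) (ha0 : 0 ≤ a)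
    (x y : Fin Q → EuclideanSpace ℝ (Fin N)) :
    ‖(WithLp.toLp 2 (-G.lvl q fun r => x r) : EuclideanSpace ℝ (Fin N))
        - WithLp.toLp 2 (-G.lvl q fun r => y r)‖ ≤ ((Q : ℝ) - 1) * a * dist x y := by
  have hgap : 0 ≤ G.gap q := by linarith [G.one_le_gap q]
  set v : Fin Q → EuclideanSpace ℝ (Fin N) := fun r => WithLp.toLp 2 fun k =>
    G.gap q * ‖G.chan r q k‖ ^ 2 / ‖G.chan q q k‖ ^ 2 * (y r k - x r k) with hv
  have e : (WithLp.toLp 2 (-G.lvl q fun r => x r) : EuclideanSpace ℝ (Fin N))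
        - WithLp.toLp 2 (-G.lvl q fun r => y r) = ∑ r ∈ Finset.univ.erase q, v r := by
    ext k
    simp only [hv, PiLp.sub_apply, WithLp.ofLp_sum, Finset.sum_apply, Pi.neg_apply, lvl, interf]
    have : ∀ z : Fin Q → EuclideanSpace ℝ (Fin N),
        G.gap q * (1 + ∑ r ∈ Finset.univ.erase q, ‖G.chan r q k‖ ^ 2 * z r k)
          / ‖G.chan q q k‖ ^ 2 = G.gap q / ‖G.chan q q k‖ ^ 2
          + ∑ r ∈ Finset.univ.erase q,
              G.gap q * ‖G.chan r q k‖ ^ 2 / ‖G.chan q q k‖ ^ 2 * z r k := by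
      intro z
      rw [mul_add, add_div, mul_one, Finset.mul_sum, Finset.sum_div]
      congr 1
      exact Finset.sum_congr rfl fun r _ => by ring
    rw [this, this]
    simp only [mul_sub, Finset.sum_sub_distrib]
    ring
  have hvr : ∀ r ∈ Finset.univ.erase q, ‖v r‖ ≤ a * dist x y := by
    intro r hr
    have hrq := Finset.ne_of_mem_erase hr
    have h1 : ‖v r‖ ≤ ‖a • (y r - x r)‖ := by
      rw [EuclideanSpace.norm_eq, EuclideanSpace.norm_eq]
      refine Real.sqrt_le_sqrt (Finset.sum_le_sum fun k _ => ?_)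
      simp only [hv, PiLp.smul_apply, PiLp.sub_apply, smul_eq_mul, norm_mul, Real.norm_eq_abs]
      have h0 : 0 ≤ G.gap q * ‖G.chan r q k‖ ^ 2 / ‖G.chan q q k‖ ^ 2 := by positivity
      rw [abs_of_nonneg h0, abs_of_nonneg ha0]
      gcongr
      exact ha r k hrq
    rw [norm_smul, Real.norm_eq_abs, abs_of_nonneg ha0] at h1
    refine h1.trans (mul_le_mul_of_nonneg_left ?_ ha0)
    rw [← dist_eq_norm, dist_comm]
    exact dist_le_pi_dist x y r
  rw [e]
  refine (norm_sum_le_of_le _ hvr).trans ?_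
  have hQ : 1 ≤ Q := by have := q.2; omega
  rw [Finset.sum_const, Finset.card_erase_of_mem (Finset.mem_univ q), Finset.card_univ,
    Fintype.card_fin, nsmul_eq_mul, Nat.cast_sub hQ, Nat.cast_one, mul_assoc]

/-- The map sending a profile to the projections of the negated normalized interferences is a
contraction whose fixed points are the Nash equilibria. -/
lemma existsUnique_isNE (G : GameData Q N) (hN : 1 ≤ N)
    (hb : ∀ q, (N : ℝ) < ∑ k, G.cap q k) {a : ℝ} (ha0 : 0 ≤ a) (haQ : ((Q : ℝ) - 1) * a < 1)
    (hQ : 1 ≤ Q)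
    (ha : ∀ q r k, r ≠ q → G.gap q * ‖G.chan r q k‖ ^ 2 / ‖G.chan q q k‖ ^ 2 ≤ a) :
    ∃! p : Fin Q → Fin N → ℝ, G.isNE p := by
  have hN' : (0 : ℝ) < N := by exact_mod_cast hN
  have hQ' : (1 : ℝ) ≤ Q := by exact_mod_cast hQ
  have hK0 : 0 ≤ ((Q : ℝ) - 1) * a := mul_nonneg (by linarith) ha0
  choose P hP using fun q => exists_proj_s4 (G.cap_nonneg q) hN' (hb q)
  set T : (Fin Q → EuclideanSpace ℝ (Fin N)) → (Fin Q → EuclideanSpace ℝ (Fin N)) :=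
    fun x q => P q (WithLp.toLp 2 (-G.lvl q fun r => x r)) with hT
  have hfix : ∀ x, Function.IsFixedPt T x ↔ G.isNE fun r => x r := by
    intro x
    rw [G.isNE_iff hN hb, Function.IsFixedPt, funext_iff]
    refine forall_congr' fun q => ?_
    rw [← isProj_iff_exchange hN']
    constructor
    · intro h
      have := hP q (WithLp.toLp 2 (-G.lvl q fun r => x r))
      rwa [show P q _ = x q from h] at this
    · intro h
      have := (hP q (WithLp.toLp 2 (-G.lvl q fun r => x r))).norm_sub_le h
      rw [sub_self, norm_zero] at this
      exact sub_eq_zero.1 (norm_le_zero_iff.1 this)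
  have hcontr : ContractingWith ⟨((Q : ℝ) - 1) * a, hK0⟩ T := by
    refine ⟨haQ, LipschitzWith.of_dist_le_mul fun x y => ?_⟩
    refine (dist_pi_le_iff (mul_nonneg hK0 dist_nonneg)).2 fun q => ?_
    rw [dist_eq_norm]
    exact ((hP q _).norm_sub_le (hP q _)).trans
      (G.norm_lvl_sub_le q (fun r k => ha q r k) ha0 x y)
  refine ⟨fun r => hcontr.fixedPoint T r, (hfix _).1 hcontr.fixedPoint_isFixedPt, ?_⟩
  intro p hp
  have h := hcontr.fixedPoint_unique
    ((hfix fun r => WithLp.toLp 2 (p r)).2 hp)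
  rw [← h]

end GameData

/-! ### Spectral radius and conclusion -/

/-- Gershgorin bound: a matrix with zero diagonal and absolute row sums below `1` has spectral
radius below `1`. -/
lemma specRad_lt_one {Q : ℕ} (M : Matrix (Fin Q) (Fin Q) ℝ) (hd : ∀ q, M q q = 0)
    (h0 : ∀ q r, 0 ≤ M q r) (h : ∀ q, ∑ r ∈ Finset.univ.erase q, M q r < 1) : specRad M < 1 := by
  set A := M.map (Complex.ofReal ·) with hA
  have hfin : ((fun z : ℂ => ‖z‖) '' spectrum ℂ A).Finite := A.finite_spectrum.image _
  rcases ((fun z : ℂ => ‖z‖) '' spectrum ℂ A).eq_empty_or_nonempty with he | hne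
  · rw [specRad, ← hA, he, Real.sSup_empty]; exact one_pos
  rw [specRad, ← hA, hfin.csSup_lt_iff hne]
  rintro _ ⟨z, hz, rfl⟩
  rw [← Matrix.spectrum_toLin', ← Module.End.hasEigenvalue_iff_mem_spectrum] at hz
  obtain ⟨k, hk⟩ := eigenvalue_mem_ball hz
  have e : ∀ j, ‖A k j‖ = M k j := fun j => by
    simp [hA, abs_of_nonneg (h0 k j)]
  have e0 : A k k = 0 := by simp [hA, hd]
  rw [e0, mem_closedBall_zero_iff, Finset.sum_congr rfl fun j _ => e j] at hk
  exact hk.trans_lt (h k)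

end NCGame

/-- **Corollary 3 (conditions C5 and C6 are sufficient for C3).** If `Q ≥ 2` and
`Γ_q |H_rq(k)|²/|H_qq(k)|² < 1/(Q−1)` for every `q`, every `r ≠ q` and every `k`
(condition C5), or under the stronger hypothesis with bound `1/(2Q−3)` (condition C6),
then `Σ_{r≠q}[H(k)]_qr < 1` for every `q, k` (condition C3 with unit weights); consequently
`ρ(H(k)) < 1` for every `k` and game `G` admits exactly one Nash equilibrium. -/
theorem NCGame.C5_C6_imply_unique_NE (Q N : ℕ) (hQ : 2 ≤ Q) (hN : 1 ≤ N)
    (G : NCGame.GameData Q N)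
    (hbudget : ∀ q, (1 : ℝ≥0∞) < (1 / (N : ℝ≥0∞)) * ∑ k, G.pmax q k)
    (hcond :
      (∀ (q r : Fin Q) (k : Fin N), r ≠ q →
          G.gap q * ‖G.chan r q k‖ ^ 2 / ‖G.chan q q k‖ ^ 2 < 1 / ((Q : ℝ) - 1)) ∨
      (∀ (q r : Fin Q) (k : Fin N), r ≠ q →
          G.gap q * ‖G.chan r q k‖ ^ 2 / ‖G.chan q q k‖ ^ 2 < 1 / (2 * (Q : ℝ) - 3))) :
    (∀ (q : Fin Q) (k : Fin N), ∑ r ∈ Finset.univ.erase q, G.Hmat k q r < 1) ∧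
    (∀ k : Fin N, NCGame.specRad (G.Hmat k) < 1) ∧
    ∃! p : Fin Q → Fin N → ℝ, G.isNE p := by
  have hQ' : (2 : ℝ) ≤ Q := by exact_mod_cast hQ
  have hQ1 : (0 : ℝ) < (Q : ℝ) - 1 := by linarith
  have h5 : ∀ (q r : Fin Q) (k : Fin N), r ≠ q →
      G.gap q * ‖G.chan r q k‖ ^ 2 / ‖G.chan q q k‖ ^ 2 < 1 / ((Q : ℝ) - 1) := by
    rcases hcond with h | h
    · exact h
    · intro q r k hr
      exact (h q r k hr).trans_le (one_div_le_one_div_of_le hQ1 (by linarith))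
  -- Finitely many strict inequalities leave room for a uniform bound `a < 1 / (Q - 1)`.
  obtain ⟨a, ha0, ha1, ha⟩ : ∃ a : ℝ, 0 ≤ a ∧ a < 1 / ((Q : ℝ) - 1) ∧
      ∀ (q r : Fin Q) (k : Fin N), r ≠ q →
        G.gap q * ‖G.chan r q k‖ ^ 2 / ‖G.chan q q k‖ ^ 2 ≤ a := by
    let F : Fin Q × Fin Q × Fin N → ℝ := fun t => if t.2.1 ≠ t.1 then
      G.gap t.1 * ‖G.chan t.2.1 t.1 t.2.2‖ ^ 2 / ‖G.chan t.1 t.1 t.2.2‖ ^ 2 else 0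
    let t₀ : Fin Q × Fin Q × Fin N := (⟨0, by omega⟩, ⟨0, by omega⟩, ⟨0, by omega⟩)
    obtain ⟨t, -, ht⟩ := Finset.exists_max_image Finset.univ F ⟨t₀, Finset.mem_univ _⟩
    refine ⟨F t, ?_, ?_, fun q r k hr => ?_⟩
    · have := ht t₀ (Finset.mem_univ _)
      simpa [F, t₀] using this
    · by_cases h : t.2.1 ≠ t.1
      · simp only [F, if_pos h]
        exact h5 _ _ _ h
      · simp only [F, if_neg h]
        positivity
    · have := ht (q, r, k) (Finset.mem_univ _)
      simpa only [F, if_pos hr] using this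
  have haQ : ((Q : ℝ) - 1) * a < 1 := by
    rwa [lt_div_iff₀ hQ1, mul_comm] at ha1
  have hH0 : ∀ k q r, 0 ≤ G.Hmat k q r := by
    intro k q r
    have : 0 ≤ G.gap q := by linarith [G.one_le_gap q]
    unfold GameData.Hmat
    split_ifs
    · positivity
    · exact le_rfl
  have hHa : ∀ k q r, G.Hmat k q r ≤ a := by
    intro k q r
    unfold GameData.Hmat
    split_ifs with h
    · exact ha q r k h.1
    · exact ha0
  have hrow : ∀ (q : Fin Q) (k : Fin N), ∑ r ∈ Finset.univ.erase q, G.Hmat k q r < 1 := by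
    intro q k
    refine (Finset.sum_le_card_nsmul _ _ a fun r _ => hHa k q r).trans_lt ?_
    rw [Finset.card_erase_of_mem (Finset.mem_univ q), Finset.card_univ, Fintype.card_fin,
      nsmul_eq_mul, Nat.cast_sub (by omega), Nat.cast_one]
    exact haQ
  refine ⟨hrow, fun k => specRad_lt_one _ (fun q => ?_) (hH0 k) fun q => hrow q k, ?_⟩
  · simp [GameData.Hmat]
  · exact G.existsUnique_isNE hN (fun q => G.lt_sum_cap hN q (hbudget q)) ha0 haQ (by omega) ha
end

section
/- Let W be an N×N complex unitary matrix, Λ an N×N diagonal matrix with nonnegative real diagonal entries λ_1,…,λ_N, P > 0, and p̄_1,…,p̄_N ≥ 0. Consider maximizing f(F) = log det(I + F^H·W·Λ·W^H·F) over F ∈ ℂ^{N×N} subject to (1/N)·tr(F F^H) ≤ P and [W^H F F^H W]_kk ≤ p̄_k for every k. Then: (a) for every feasible F, the matrix F' = W·diag(√p_1,…,√p_N) with p_k = [W^H F F^H W]_kk is feasible and satisfies f(F') ≥ f(F); (b) the maximum of f over the feasible set is attained at a matrix of the form F = W·diag(√p_1,…,√p_N), and equals the maximum of Σ_{k=1}^N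 log(1 + λ_k·p_k) over all p ∈ ℝ^N with 0 ≤ p_k ≤ p̄_k and (1/N)·Σ_k p_k ≤ P. (Theorem 1 for the mutual-information game G1: the channel-diagonalizing transmit structure is optimal under both transmit-power and spectral-mask constraints.) -/
/-!
Put `p_k = [Wᴴ F Fᴴ W]_kk`, `S = diag(√λ)` and `M = S Wᴴ F`, so that `I + Fᴴ W Λ Wᴴ F = I + Mᴴ M`.
By the Weinstein–Aronszajn identity its determinant is that of `I + M Mᴴ`, a positive definite matrix
whose diagonal entries are `1 + λ_k p_k`. Hadamard's determinant inequality
(`det_le_prod_diag`) gives `f(F) ≤ ∑ log(1 + λ_k p_k)`, and the diagonalizing precoder with the same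
powers attains equality (`f_diagF`). Feasibility depends on `F` only through `p`, because
`tr(F Fᴴ) = ∑ p_k` for unitary `W`. Hence the matrix problem reduces to maximizing a continuous
function over a compact set of power vectors, where a maximizer exists.

Hadamard's inequality is proved by rescaling to unit diagonal: the eigenvalues `μ_i` of the rescaled
matrix sum to `N`, and `∏ μ_i ≤ ∏ exp(μ_i - 1) = 1`.
-/


open Matrix

namespace DiagOpt

variable {N : ℕ}

/-- Mutual information `f(F) = log det(I + Fᴴ W Λ Wᴴ F)` (the determinant is a positive
real number, and we take its real part). -/
noncomputable def f (W : Matrix (Fin N) (Fin N) ℂ) (lam : Fin N → ℝ)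
    (F : Matrix (Fin N) (Fin N) ℂ) : ℝ :=
  Real.log (Matrix.det (1 + Fᴴ * W * Matrix.diagonal (fun k => (lam k : ℂ)) * Wᴴ * F)).re

/-- Feasibility of a precoder `F`: transmit-power and spectral-mask constraints. -/
def feasible (W : Matrix (Fin N) (Fin N) ℂ) (P : ℝ) (pbar : Fin N → ℝ)
    (F : Matrix (Fin N) (Fin N) ℂ) : Prop :=
  (1 / (N : ℝ)) * (Matrix.trace (F * Fᴴ)).re ≤ P ∧
  ∀ k, ((Wᴴ * F * Fᴴ * W) k k).re ≤ pbar k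

/-- The channel-diagonalizing precoder `W · diag(√p₁, …, √p_N)`. -/
noncomputable def diagF (W : Matrix (Fin N) (Fin N) ℂ) (p : Fin N → ℝ) :
    Matrix (Fin N) (Fin N) ℂ :=
  W * Matrix.diagonal (fun k => (Real.sqrt (p k) : ℂ))

/-- Feasibility of a power vector `p` in the reduced (vector) problem. -/
def vecFeasible (P : ℝ) (pbar : Fin N → ℝ) (p : Fin N → ℝ) : Prop :=
  (∀ k, 0 ≤ p k ∧ p k ≤ pbar k) ∧ (1 / (N : ℝ)) * ∑ k, p k ≤ P

end DiagOpt

namespace DiagOpt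

open scoped ComplexOrder

/-- A positive semidefinite matrix with trace equal to its size has determinant at most one. -/
lemma det_le_one_of_trace {n : ℕ} {A : Matrix (Fin n) (Fin n) ℂ} (hA : A.PosSemidef)
    (ht : A.trace = n) : A.det.re ≤ 1 := by
  have hsum : ∑ i, hA.1.eigenvalues i = n := by
    have h := hA.1.trace_eq_sum_eigenvalues
    rw [ht] at h
    apply Complex.ofReal_injective
    push_cast
    exact h.symm
  have hdet : A.det.re = ∏ i, hA.1.eigenvalues i := by
    have h := hA.1.det_eq_prod_eigenvalues
    rw [h]
    have h2 : (∏ i, ((hA.1.eigenvalues i : ℝ) : ℂ)) = ((∏ i, hA.1.eigenvalues i : ℝ) : ℂ) := by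
      push_cast; rfl
    exact (congrArg Complex.re h2).trans (Complex.ofReal_re _)
  rw [hdet]
  calc ∏ i, hA.1.eigenvalues i ≤ ∏ i, Real.exp (hA.1.eigenvalues i - 1) := by
        refine Finset.prod_le_prod (fun i _ => hA.eigenvalues_nonneg i) (fun i _ => ?_)
        have := Real.add_one_le_exp (hA.1.eigenvalues i - 1)
        linarith
    _ = 1 := by
        rw [← Real.exp_sum, Finset.sum_sub_distrib, hsum]
        simp

/-- Hadamard's determinant inequality, for a positive semidefinite matrix with prescribed positive
diagonal `a`. -/
lemma det_le_prod_diag {n : ℕ} {A : Matrix (Fin n) (Fin n) ℂ} (hA : A.PosSemidef)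
    (a : Fin n → ℝ) (ha : ∀ i, 0 < a i) (hd : ∀ i, A i i = (a i : ℂ)) :
    A.det.re ≤ ∏ i, a i := by
  set d : Fin n → ℂ := fun i => (((Real.sqrt (a i))⁻¹ : ℝ) : ℂ) with hdd
  have hdsq : ∀ i, d i * d i = (((a i)⁻¹ : ℝ) : ℂ) := fun i => by
    simp only [hdd]
    rw [← Complex.ofReal_mul, ← mul_inv, Real.mul_self_sqrt (ha i).le]
  have hDH : (diagonal d)ᴴ = diagonal d := by
    rw [diagonal_conjTranspose]
    congr 1
    ext i
    simp [hdd]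
  have hB : (diagonal d * A * diagonal d).PosSemidef := by
    have h := hA.conjTranspose_mul_mul_same (diagonal d)
    rwa [hDH] at h
  have ht : (diagonal d * A * diagonal d).trace = n := by
    have : ∀ i, (diagonal d * A * diagonal d) i i = 1 := fun i => by
      rw [mul_diagonal, diagonal_mul, hd, mul_right_comm, hdsq, ← Complex.ofReal_mul,
        inv_mul_cancel₀ (ha i).ne', Complex.ofReal_one]
    simp [Matrix.trace, this]
  have h1 := det_le_one_of_trace hB ht
  have h2 : (diagonal d * A * diagonal d).det = (((∏ i, a i)⁻¹ : ℝ) : ℂ) * A.det := by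
    rw [det_mul, det_mul, det_diagonal, mul_right_comm, ← Finset.prod_mul_distrib,
      Finset.prod_congr rfl (fun i _ => hdsq i), ← Complex.ofReal_prod, Finset.prod_inv_distrib]
  have hpos : 0 < ∏ i, a i := Finset.prod_pos fun i _ => ha i
  rw [h2, Complex.re_ofReal_mul, inv_mul_le_iff₀ hpos, mul_one] at h1
  exact h1

variable {N : ℕ} {W : Matrix (Fin N) (Fin N) ℂ}

lemma gram_posSemidef (W F : Matrix (Fin N) (Fin N) ℂ) : (Wᴴ * F * Fᴴ * W).PosSemidef := by
  have h := posSemidef_self_mul_conjTranspose (Wᴴ * F)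
  rwa [conjTranspose_mul, conjTranspose_conjTranspose, ← Matrix.mul_assoc] at h

lemma gram_diag (W F : Matrix (Fin N) (Fin N) ℂ) (k : Fin N) :
    (Wᴴ * F * Fᴴ * W) k k = (((Wᴴ * F * Fᴴ * W) k k).re : ℂ) ∧
      0 ≤ ((Wᴴ * F * Fᴴ * W) k k).re := by
  have h := (gram_posSemidef W F).diag_nonneg (i := k)
  rw [Complex.nonneg_iff] at h
  exact ⟨Complex.ext rfl (by simpa using h.2.symm), h.1⟩

lemma trace_eq (hW : W * Wᴴ = 1) (F : Matrix (Fin N) (Fin N) ℂ) :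
    (Matrix.trace (F * Fᴴ)).re = ∑ k, ((Wᴴ * F * Fᴴ * W) k k).re := by
  have h : Matrix.trace (Wᴴ * F * Fᴴ * W) = Matrix.trace (F * Fᴴ) := by
    rw [Matrix.trace_mul_comm, ← Matrix.mul_assoc, ← Matrix.mul_assoc, hW, Matrix.one_mul]
  rw [← h, Matrix.trace, Complex.re_sum]
  rfl

lemma feasible_iff (hW : W * Wᴴ = 1) (P : ℝ) (pbar : Fin N → ℝ) (F : Matrix (Fin N) (Fin N) ℂ) :
    feasible W P pbar F ↔ vecFeasible P pbar (fun k => ((Wᴴ * F * Fᴴ * W) k k).re) := by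
  unfold feasible vecFeasible
  rw [trace_eq hW]
  exact ⟨fun h => ⟨fun k => ⟨(gram_diag W F k).2, h.2 k⟩, h.1⟩, fun h => ⟨h.2, fun k => (h.1 k).2⟩⟩

lemma conjTranspose_diagF (W : Matrix (Fin N) (Fin N) ℂ) (p : Fin N → ℝ) :
    (diagF W p)ᴴ = diagonal (fun k => (Real.sqrt (p k) : ℂ)) * Wᴴ := by
  rw [diagF, conjTranspose_mul, diagonal_conjTranspose]
  congr 2
  ext i
  simp

lemma conjTranspose_mul_diagF (hW : Wᴴ * W = 1) (p : Fin N → ℝ) :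
    Wᴴ * diagF W p = diagonal (fun k => (Real.sqrt (p k) : ℂ)) := by
  rw [diagF, ← Matrix.mul_assoc, hW, Matrix.one_mul]

lemma gram_diagF (hW : Wᴴ * W = 1) {p : Fin N → ℝ} (hp : ∀ k, 0 ≤ p k) :
    (fun k => ((Wᴴ * diagF W p * (diagF W p)ᴴ * W) k k).re) = p := by
  ext k
  rw [conjTranspose_mul_diagF hW, conjTranspose_diagF, Matrix.mul_assoc, Matrix.mul_assoc, hW,
    Matrix.mul_one, diagonal_mul_diagonal, diagonal_apply_eq, ← Complex.ofReal_mul,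
    Complex.ofReal_re, Real.mul_self_sqrt (hp k)]

lemma f_diagF (hW : Wᴴ * W = 1) {lam p : Fin N → ℝ} (hlam : ∀ k, 0 ≤ lam k)
    (hp : ∀ k, 0 ≤ p k) :
    f W lam (diagF W p) = ∑ k, Real.log (1 + lam k * p k) := by
  have h : (1 + (diagF W p)ᴴ * W * diagonal (fun k => (lam k : ℂ)) * Wᴴ * diagF W p)
      = diagonal (fun k => ((1 + lam k * p k : ℝ) : ℂ)) := by
    rw [Matrix.mul_assoc _ Wᴴ, conjTranspose_mul_diagF hW, conjTranspose_diagF,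
      Matrix.mul_assoc _ Wᴴ, hW, Matrix.mul_one, diagonal_mul_diagonal, diagonal_mul_diagonal,
      ← diagonal_one, diagonal_add]
    congr 1
    ext k
    rw [mul_right_comm, ← Complex.ofReal_mul, Real.mul_self_sqrt (hp k)]
    push_cast
    ring
  rw [f, h, det_diagonal, ← Complex.ofReal_prod, Complex.ofReal_re, Real.log_prod]
  intro k _
  have := mul_nonneg (hlam k) (hp k)
  positivity

lemma f_le (W : Matrix (Fin N) (Fin N) ℂ) {lam : Fin N → ℝ} (hlam : ∀ k, 0 ≤ lam k)
    (F : Matrix (Fin N) (Fin N) ℂ) :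
    f W lam F ≤ ∑ k, Real.log (1 + lam k * ((Wᴴ * F * Fᴴ * W) k k).re) := by
  set s : Fin N → ℂ := fun k => (Real.sqrt (lam k) : ℂ) with hs
  have hss : ∀ k, s k * s k = (lam k : ℂ) := fun k => by
    simp only [hs]
    rw [← Complex.ofReal_mul, Real.mul_self_sqrt (hlam k)]
  have hSH : (diagonal s)ᴴ = diagonal s := by
    rw [diagonal_conjTranspose]
    congr 1
    ext i
    simp [hs]
  set M := diagonal s * (Wᴴ * F) with hM
  have hMH : Mᴴ = Fᴴ * W * diagonal s := by
    rw [hM, conjTranspose_mul, conjTranspose_mul, conjTranspose_conjTranspose, hSH]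
  have h1 : Fᴴ * W * diagonal (fun k => (lam k : ℂ)) * Wᴴ * F = Mᴴ * M := by
    have hL : diagonal (fun k => (lam k : ℂ)) = diagonal s * diagonal s := by
      rw [diagonal_mul_diagonal]
      exact congrArg diagonal (funext fun k => (hss k).symm)
    rw [hMH, hM, hL]
    simp only [Matrix.mul_assoc]
  have h2 : M * Mᴴ = diagonal s * (Wᴴ * F * Fᴴ * W) * diagonal s := by
    rw [hMH, hM]
    simp only [Matrix.mul_assoc]
  have hpos : (1 + M * Mᴴ).PosDef :=
    PosDef.one.add_posSemidef (posSemidef_self_mul_conjTranspose M)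
  have hp : ∀ k, 0 < 1 + lam k * ((Wᴴ * F * Fᴴ * W) k k).re := fun k => by
    have := mul_nonneg (hlam k) (gram_diag W F k).2
    positivity
  have hle := det_le_prod_diag hpos.posSemidef _ hp fun k => by
    rw [Matrix.add_apply, one_apply_eq, h2, mul_diagonal, diagonal_mul, mul_right_comm, hss]
    conv_lhs => rw [(gram_diag W F k).1]
    push_cast
    rfl
  have hdet : 0 < (1 + M * Mᴴ).det.re := (Complex.pos_iff.mp hpos.det_pos).1
  rw [f, h1, det_one_add_mul_comm, ← Real.log_prod fun k _ => (hp k).ne']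
  exact Real.log_le_log hdet hle

lemma exists_vec_max {lam : Fin N → ℝ} (hlam : ∀ k, 0 ≤ lam k) {P : ℝ} (hP : 0 < P)
    {pbar : Fin N → ℝ} (hpbar : ∀ k, 0 ≤ pbar k) :
    ∃ p, vecFeasible P pbar p ∧ ∀ q, vecFeasible P pbar q →
      ∑ k, Real.log (1 + lam k * q k) ≤ ∑ k, Real.log (1 + lam k * p k) := by
  have hset : {p | vecFeasible P pbar p}
      = Set.Icc 0 pbar ∩ {p : Fin N → ℝ | (1 / (N : ℝ)) * ∑ k, p k ≤ P} := by
    ext p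
    simp only [vecFeasible, Set.mem_ofPred_eq, Set.mem_inter_iff, Set.mem_Icc, Pi.le_def,
      Pi.zero_apply, forall_and]
  have hK : IsCompact {p | vecFeasible P pbar p} := by
    rw [hset]
    exact isCompact_Icc.inter_right (isClosed_le (by fun_prop) continuous_const)
  have hne : {p | vecFeasible P pbar p}.Nonempty :=
    ⟨0, fun k => ⟨le_rfl, hpbar k⟩, by simpa using hP.le⟩
  have hc : ContinuousOn (fun p : Fin N → ℝ => ∑ k, Real.log (1 + lam k * p k))
      {p | vecFeasible P pbar p} := by
    refine continuousOn_finsetSum _ fun k _ => ContinuousOn.log (by fun_prop) fun p hp => ?_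
    have := mul_nonneg (hlam k) (hp.1 k).1
    positivity
  obtain ⟨p, hp, hmax⟩ := hK.exists_isMaxOn hne hc
  exact ⟨p, hp, fun q hq => hmax hq⟩

end DiagOpt

/-- **Theorem 1 for the mutual-information game `G₁`** (single-user step): the
channel-diagonalizing transmit structure is optimal under both transmit-power and
spectral-mask constraints.  (a) For every feasible `F`, the matrix
`F' = W diag(√p)` with `p_k = [Wᴴ F Fᴴ W]_kk` is feasible and `f(F') ≥ f(F)`;
(b) the maximum of `f` over the feasible set is attained at a matrix of the form
`W diag(√p)` and equals the maximum of `Σ_k log(1 + λ_k p_k)` over the feasible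
power vectors. -/
theorem DiagOpt.diagonalizing_structure_optimal (N : ℕ) (hN : 1 ≤ N)
    (W : Matrix (Fin N) (Fin N) ℂ) (hW : W * Wᴴ = 1 ∧ Wᴴ * W = 1)
    (lam : Fin N → ℝ) (hlam : ∀ k, 0 ≤ lam k)
    (P : ℝ) (hP : 0 < P) (pbar : Fin N → ℝ) (hpbar : ∀ k, 0 ≤ pbar k) :
    (∀ F : Matrix (Fin N) (Fin N) ℂ, DiagOpt.feasible W P pbar F →
      DiagOpt.feasible W P pbar (DiagOpt.diagF W (fun k => ((Wᴴ * F * Fᴴ * W) k k).re)) ∧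
      DiagOpt.f W lam F ≤
        DiagOpt.f W lam (DiagOpt.diagF W (fun k => ((Wᴴ * F * Fᴴ * W) k k).re))) ∧
    (∃ p : Fin N → ℝ, DiagOpt.vecFeasible P pbar p ∧
      IsGreatest (DiagOpt.f W lam '' { F | DiagOpt.feasible W P pbar F })
        (DiagOpt.f W lam (DiagOpt.diagF W p)) ∧
      IsGreatest ((fun p' => ∑ k, Real.log (1 + lam k * p' k)) ''
          { p' | DiagOpt.vecFeasible P pbar p' })
        (∑ k, Real.log (1 + lam k * p k)) ∧
      DiagOpt.f W lam (DiagOpt.diagF W p) = ∑ k, Real.log (1 + lam k * p k)) := by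
  have key := fun F (hF : feasible W P pbar F) => (feasible_iff hW.1 P pbar F).1 hF
  have hdiag : ∀ p, vecFeasible P pbar p → feasible W P pbar (diagF W p) := fun p hp => by
    rw [feasible_iff hW.1, gram_diagF hW.2 fun k => (hp.1 k).1]
    exact hp
  refine ⟨fun F hF => ⟨hdiag _ (key F hF), ?_⟩, ?_⟩
  · rw [f_diagF hW.2 hlam fun k => ((key F hF).1 k).1]
    exact f_le W hlam F
  · obtain ⟨p, hp, hmax⟩ := exists_vec_max hlam hP hpbar
    have hfp := f_diagF hW.2 hlam fun k => (hp.1 k).1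
    refine ⟨p, hp, ⟨⟨_, hdiag p hp, rfl⟩, ?_⟩, ⟨⟨p, hp, rfl⟩, ?_⟩, hfp⟩
    · rintro _ ⟨F, hF, rfl⟩
      rw [hfp]
      exact (f_le W hlam F).trans (hmax _ (key F hF))
    · rintro _ ⟨q, hq, rfl⟩
      exact hmax q hq
end

section
/- In the snr/inr parameterization of game G (no spectral-mask constraints), there exist thresholds ε_rq > 0 (for r ≠ q) and S_q > 0 such that whenever 0 ≤ inr_rq ≤ ε_rq for all r ≠ q and snr_q ≥ S_q for all q, game G admits a unique Nash equilibrium p*, and at this equilibrium p*_q(k) > 0 for every user q and every carrier k (every user transmits over the whole bandwidth). Moreover, for every δ > 0 the thresholds S_q can be chosen large enough that the unique Nash equilibrium additionally satisfies |p*_q(k) − 1| < δ for all q and k (the power allocation tends to be flat). (Proposition 1, low-interference case.) -/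
/-!
Write `a_q(k) = Γ_q I_q(k) / (snr_q |H̄_qq(k)|²)` for the effective noise seen by user `q`, where `I_q`
is noise plus interference. The payoff of user `q` is the average of `log (1 + p_q(k) / a_q(k))`, and the
best response is waterfilling over `a_q`. For large snr all the values `a_q(k)` are below `1`, so
the water covers every carrier and the best response is the explicit affine expression
`1 + mean a_q - a_q(k)` (`waterfill_iff`; optimality and its uniqueness both come from
`log x ≤ x - 1`, with equality only at `x = 1`). Nash equilibria are thus the feasible fixed points of
an affine map `bestResp` (`isNE_iff`). Once `snr_q` is large compared with the cross gains, this map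
is a contraction, and its fixed point lies close to the flat allocation `1`, hence is feasible and
positive. The interference thresholds can be taken equal to `1`.
-/

namespace SnrGame

/-- Strategy set (no spectral-mask constraints): nonnegative powers with average at most `1`. -/
def stratSet (N : ℕ) : Set (Fin N → ℝ) :=
  { p | (∀ k, 0 ≤ p k) ∧ (1 / (N : ℝ)) * ∑ k, p k ≤ 1 }

variable {Q N : ℕ}

/-- Payoff `R_q(p)` of user `q` in the snr/inr parameterization: the channel gains are
`|H_qq(k)|² = snr_q |H̄_qq(k)|²` and `|H_rq(k)|² = inr_rq |H̄_rq(k)|²` for `r ≠ q`. -/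
noncomputable def payoff (Hbar : Fin Q → Fin Q → Fin N → ℂ) (Γ : Fin Q → ℝ)
    (snr : Fin Q → ℝ) (inr : Fin Q → Fin Q → ℝ) (q : Fin Q)
    (p : Fin Q → Fin N → ℝ) : ℝ :=
  (1 / (N : ℝ)) * ∑ k, Real.log (1 +
    (1 / Γ q) * (snr q * ‖Hbar q q k‖ ^ 2 * p q k) /
      (1 + ∑ r ∈ Finset.univ.erase q, inr r q * ‖Hbar r q k‖ ^ 2 * p r k))

/-- `p` is a Nash equilibrium of game `G` in the snr/inr parameterization. -/
def isNE (Hbar : Fin Q → Fin Q → Fin N → ℂ) (Γ : Fin Q → ℝ)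
    (snr : Fin Q → ℝ) (inr : Fin Q → Fin Q → ℝ) (p : Fin Q → Fin N → ℝ) : Prop :=
  (∀ q, p q ∈ stratSet N) ∧
  ∀ q, ∀ pq ∈ stratSet N,
    payoff Hbar Γ snr inr q (Function.update p q pq) ≤ payoff Hbar Γ snr inr q p

end SnrGame

namespace SnrGame

/-- When every noise level is in `(0, 1)`, the unique maximizer of
`∑ log (1 + p k / a k)` over the strategy set is full-band waterfilling. -/
lemma waterfill_iff (hN : 1 ≤ N) (a : Fin N → ℝ) (ha : ∀ k, 0 < a k) (ha1 : ∀ k, a k < 1)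
    (p : Fin N → ℝ) (hp : p ∈ stratSet N) :
    (∀ p' ∈ stratSet N, ∑ k, Real.log (1 + p' k / a k) ≤ ∑ k, Real.log (1 + p k / a k)) ↔
      ∀ k, p k = 1 + (1 / (N : ℝ)) * ∑ j, a j - a k := by
  have hN0 : (0 : ℝ) < N := by exact_mod_cast hN
  set m : ℝ := 1 + (1 / (N : ℝ)) * ∑ j, a j with hm
  have hm1 : 1 ≤ m := by
    have : 0 ≤ ∑ j, a j := Finset.sum_nonneg fun j _ => (ha j).le
    have : 0 ≤ (1 / (N : ℝ)) * ∑ j, a j := by positivity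
    linarith
  have hm0 : 0 < m := by linarith
  have hNm : N * m = N + ∑ j, a j := by rw [hm]; field_simp
  have hsum : ∀ p ∈ stratSet N, ∑ k, p k ≤ N := by
    intro p hp
    have h := hp.2
    rw [one_div, inv_mul_le_iff₀ hN0] at h
    linarith
  -- `x k = (a k + p k) / m` is the level reached on carrier `k`, relative to the water level `m`
  have hx0 : ∀ p ∈ stratSet N, ∀ k, 0 < (a k + p k) / m := fun p hp k =>
    div_pos (add_pos_of_pos_of_nonneg (ha k) (hp.1 k)) hm0
  have hlog : ∀ p ∈ stratSet N, ∑ k, Real.log (1 + p k / a k) =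
      ∑ k, Real.log ((a k + p k) / m) + ∑ k, Real.log (m / a k) := by
    intro p hp
    rw [← Finset.sum_add_distrib]
    refine Finset.sum_congr rfl fun k _ => ?_
    have h1 := ha k
    rw [← Real.log_mul (hx0 p hp k).ne' (div_pos hm0 h1).ne']
    congr 1
    field_simp
  have hle : ∀ p ∈ stratSet N, ∑ k, ((a k + p k) / m - 1) ≤ 0 := by
    intro p hp
    have : ∑ k, ((a k + p k) / m - 1) = (∑ k, a k + ∑ k, p k) / m - N := by
      rw [Finset.sum_sub_distrib, ← Finset.sum_div, Finset.sum_add_distrib]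
      simp
    rw [this, sub_nonpos, div_le_iff₀ hm0, hNm]
    linarith [hsum p hp]
  constructor
  · intro hmax
    have hw : (fun k => m - a k) ∈ stratSet N := by
      refine ⟨fun k => by linarith [ha1 k], ?_⟩
      rw [Finset.sum_sub_distrib, one_div, inv_mul_le_iff₀ hN0]
      simp only [Finset.sum_const, Finset.card_univ, Fintype.card_fin, nsmul_eq_mul]
      linarith
    have h := hmax _ hw
    rw [hlog _ hw, hlog _ hp] at h
    have hz : ∑ k, Real.log ((a k + (m - a k)) / m) = 0 := by
      refine Finset.sum_eq_zero fun k _ => ?_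
      rw [show a k + (m - a k) = m by ring, div_self hm0.ne', Real.log_one]
    by_contra hne
    push Not at hne
    obtain ⟨k, hk⟩ := hne
    have hlt : ∑ k, Real.log ((a k + p k) / m) < ∑ k, ((a k + p k) / m - 1) := by
      refine Finset.sum_lt_sum (fun k _ => Real.log_le_sub_one_of_pos (hx0 p hp k))
        ⟨k, Finset.mem_univ k, Real.log_lt_sub_one_of_pos (hx0 p hp k) fun h1 => hk ?_⟩
      rw [div_eq_one_iff_eq hm0.ne'] at h1
      linarith
    linarith [hle p hp]
  · intro h p' hp'
    rw [hlog _ hp', hlog _ hp]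
    have hz : ∑ k, Real.log ((a k + p k) / m) = 0 := by
      refine Finset.sum_eq_zero fun k _ => ?_
      rw [h k, show a k + (m - a k) = m by ring, div_self hm0.ne', Real.log_one]
    have h1 : ∑ k, Real.log ((a k + p' k) / m) ≤ ∑ k, ((a k + p' k) / m - 1) :=
      Finset.sum_le_sum fun k _ => Real.log_le_sub_one_of_pos (hx0 p' hp' k)
    have h2 := hle p' hp'
    linarith

/-- Effective noise `Γ_q I_q(k) / (snr_q |H̄_qq(k)|²)` of user `q` on carrier `k`. -/
noncomputable def noise (Hbar : Fin Q → Fin Q → Fin N → ℂ) (Γ : Fin Q → ℝ)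
    (snr : Fin Q → ℝ) (inr : Fin Q → Fin Q → ℝ) (p : Fin Q → Fin N → ℝ)
    (q : Fin Q) (k : Fin N) : ℝ :=
  Γ q * (1 + ∑ r ∈ Finset.univ.erase q, inr r q * ‖Hbar r q k‖ ^ 2 * p r k) /
    (snr q * ‖Hbar q q k‖ ^ 2)

/-- Full-band waterfilling against `noise`. It is the best response only where the noise levels are
below `1`, but is defined, and affine, on all profiles. -/
noncomputable def bestResp (Hbar : Fin Q → Fin Q → Fin N → ℂ) (Γ : Fin Q → ℝ)
    (snr : Fin Q → ℝ) (inr : Fin Q → Fin Q → ℝ) (p : Fin Q → Fin N → ℝ)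
    (q : Fin Q) (k : Fin N) : ℝ :=
  1 + (1 / (N : ℝ)) * ∑ j, noise Hbar Γ snr inr p q j - noise Hbar Γ snr inr p q k

/-- Upper bound for `snr_q` times the noise level, and for `snr_q` times its Lipschitz constant in the
sup norm, when all `inr ≤ 1`; the factor `N` bounds each power in the strategy set. -/
noncomputable def noiseBound (Hbar : Fin Q → Fin Q → Fin N → ℂ) (Γ : Fin Q → ℝ)
    (q : Fin Q) (k : Fin N) : ℝ :=
  Γ q * (1 + ∑ r ∈ Finset.univ.erase q, ‖Hbar r q k‖ ^ 2 * N) / ‖Hbar q q k‖ ^ 2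

section

variable {Hbar : Fin Q → Fin Q → Fin N → ℂ} {Γ snr : Fin Q → ℝ} {inr : Fin Q → Fin Q → ℝ}

lemma payoff_update (p : Fin Q → Fin N → ℝ) (q : Fin Q) (x : Fin N → ℝ) :
    payoff Hbar Γ snr inr q (Function.update p q x) =
      (1 / (N : ℝ)) * ∑ k, Real.log (1 + x k / noise Hbar Γ snr inr p q k) := by
  unfold payoff noise
  congr 1
  refine Finset.sum_congr rfl fun k _ => ?_
  have hI : ∑ r ∈ Finset.univ.erase q, inr r q * ‖Hbar r q k‖ ^ 2 * Function.update p q x r k =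
      ∑ r ∈ Finset.univ.erase q, inr r q * ‖Hbar r q k‖ ^ 2 * p r k := by
    refine Finset.sum_congr rfl fun r hr => ?_
    rw [Function.update_of_ne (Finset.ne_of_mem_erase hr)]
  rw [hI, Function.update_self, div_div_eq_mul_div, one_div_mul_eq_div, div_div]
  congr 3
  ring

lemma noise_pos (hH : ∀ q k, Hbar q q k ≠ 0) (hΓ : ∀ q, 1 ≤ Γ q) (hsnr : ∀ q, 0 < snr q)
    (hinr : ∀ r q, r ≠ q → 0 ≤ inr r q ∧ inr r q ≤ 1)
    {p : Fin Q → Fin N → ℝ} (hp : ∀ q, p q ∈ stratSet N) (q : Fin Q) (k : Fin N) :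
    0 < noise Hbar Γ snr inr p q k := by
  have h1 : 0 ≤ ∑ r ∈ Finset.univ.erase q, inr r q * ‖Hbar r q k‖ ^ 2 * p r k :=
    Finset.sum_nonneg fun r hr => mul_nonneg (mul_nonneg
      (hinr r q (Finset.ne_of_mem_erase hr)).1 (sq_nonneg _)) ((hp r).1 k)
  have h2 : 0 < ‖Hbar q q k‖ := norm_pos_iff.2 (hH q k)
  have h3 := hsnr q
  have h4 : 0 < Γ q := by linarith [hΓ q]
  unfold noise
  positivity

lemma le_card_of_mem_stratSet {p : Fin N → ℝ} (hp : p ∈ stratSet N) (k : Fin N) : p k ≤ N := by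
  have hN0 : (0 : ℝ) < N := by exact_mod_cast k.pos
  have h := hp.2
  rw [one_div, inv_mul_le_iff₀ hN0, mul_one] at h
  exact (Finset.single_le_sum (fun j _ => hp.1 j) (Finset.mem_univ k)).trans h

lemma noise_le (hΓ : ∀ q, 1 ≤ Γ q) (hsnr : ∀ q, 0 < snr q)
    (hinr : ∀ r q, r ≠ q → 0 ≤ inr r q ∧ inr r q ≤ 1)
    {p : Fin Q → Fin N → ℝ} (hp : ∀ q, p q ∈ stratSet N) (q : Fin Q) (k : Fin N) :
    noise Hbar Γ snr inr p q k ≤ noiseBound Hbar Γ q k / snr q := by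
  have h1 : ∑ r ∈ Finset.univ.erase q, inr r q * ‖Hbar r q k‖ ^ 2 * p r k ≤
      ∑ r ∈ Finset.univ.erase q, ‖Hbar r q k‖ ^ 2 * N := by
    refine Finset.sum_le_sum fun r hr => ?_
    have h2 := hinr r q (Finset.ne_of_mem_erase hr)
    exact mul_le_mul (mul_le_of_le_one_left (sq_nonneg _) h2.2) (le_card_of_mem_stratSet (hp r) k)
      ((hp r).1 k) (sq_nonneg _)
  have h3 := hsnr q
  have h4 : 0 < Γ q := by linarith [hΓ q]
  unfold noise noiseBound
  rw [div_div, mul_comm (‖Hbar q q k‖ ^ 2)]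
  gcongr

lemma noise_lipschitz (hΓ : ∀ q, 1 ≤ Γ q) (hsnr : ∀ q, 0 < snr q)
    (hinr : ∀ r q, r ≠ q → 0 ≤ inr r q ∧ inr r q ≤ 1)
    (p p' : Fin Q → Fin N → ℝ) (q : Fin Q) (k : Fin N) :
    |noise Hbar Γ snr inr p q k - noise Hbar Γ snr inr p' q k| ≤
      noiseBound Hbar Γ q k / snr q * dist p p' := by
  have hN1 : (1 : ℝ) ≤ N := by exact_mod_cast k.pos
  have h3 := hsnr q
  have h4 : 0 < Γ q := by linarith [hΓ q]
  have hdist : ∀ r, |p r k - p' r k| ≤ dist p p' := fun r =>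
    (dist_le_pi_dist (p r) (p' r) k).trans (dist_le_pi_dist p p' r)
  have h1 : |∑ r ∈ Finset.univ.erase q, inr r q * ‖Hbar r q k‖ ^ 2 * (p r k - p' r k)| ≤
      (1 + ∑ r ∈ Finset.univ.erase q, ‖Hbar r q k‖ ^ 2 * N) * dist p p' := by
    refine (Finset.abs_sum_le_sum_abs _ _).trans ?_
    rw [add_mul, Finset.sum_mul, one_mul]
    refine le_add_of_nonneg_of_le dist_nonneg (Finset.sum_le_sum fun r hr => ?_)
    have h2 := hinr r q (Finset.ne_of_mem_erase hr)
    rw [abs_mul, abs_of_nonneg (mul_nonneg h2.1 (sq_nonneg _))]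
    refine mul_le_mul ?_ (hdist r) (abs_nonneg _) (by positivity)
    exact (mul_le_of_le_one_left (sq_nonneg _) h2.2).trans
      (le_mul_of_one_le_right (sq_nonneg _) hN1)
  have heq : noise Hbar Γ snr inr p q k - noise Hbar Γ snr inr p' q k =
      Γ q * (∑ r ∈ Finset.univ.erase q, inr r q * ‖Hbar r q k‖ ^ 2 * (p r k - p' r k)) /
        (snr q * ‖Hbar q q k‖ ^ 2) := by
    unfold noise
    simp only [mul_sub, Finset.sum_sub_distrib]
    ring
  rw [heq, abs_div, abs_mul, abs_of_pos h4,
    abs_of_nonneg (mul_nonneg h3.le (sq_nonneg _))]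
  unfold noiseBound
  rw [div_div, mul_comm (‖Hbar q q k‖ ^ 2), div_mul_eq_mul_div, mul_assoc (Γ q)]
  gcongr

lemma isNE_iff (hN : 1 ≤ N) (hH : ∀ q k, Hbar q q k ≠ 0) (hΓ : ∀ q, 1 ≤ Γ q)
    (hsnr : ∀ q, 0 < snr q) (hinr : ∀ r q, r ≠ q → 0 ≤ inr r q ∧ inr r q ≤ 1)
    (hbd : ∀ q k, noiseBound Hbar Γ q k / snr q < 1) (p : Fin Q → Fin N → ℝ) :
    isNE Hbar Γ snr inr p ↔ (∀ q, p q ∈ stratSet N) ∧ bestResp Hbar Γ snr inr p = p := by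
  have hN0 : (0 : ℝ) < N := by exact_mod_cast hN
  refine and_congr_right fun hp => ?_
  have key : ∀ q, (∀ pq ∈ stratSet N, payoff Hbar Γ snr inr q (Function.update p q pq) ≤
      payoff Hbar Γ snr inr q p) ↔ ∀ k, bestResp Hbar Γ snr inr p q k = p q k := by
    intro q
    have h := waterfill_iff hN (noise Hbar Γ snr inr p q)
      (fun k => noise_pos hH hΓ hsnr hinr hp q k)
      (fun k => (noise_le hΓ hsnr hinr hp q k).trans_lt (hbd q k)) (p q) (hp q)
    have hself : payoff Hbar Γ snr inr q p =
        (1 / (N : ℝ)) * ∑ k, Real.log (1 + p q k / noise Hbar Γ snr inr p q k) := by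
      rw [← payoff_update, Function.update_eq_self]
    simp only [payoff_update, hself,
      mul_le_mul_iff_right₀ (one_div_pos.2 hN0), h]
    exact forall_congr' fun k => eq_comm
  simp only [key, funext_iff]

/-- An average over the carriers inherits any bound on its terms. -/
lemma abs_mean_le (hN : 1 ≤ N) (f : Fin N → ℝ) (c : ℝ) (hf : ∀ k, |f k| ≤ c) :
    |(1 / (N : ℝ)) * ∑ j, f j| ≤ c := by
  have hN0 : (0 : ℝ) < N := by exact_mod_cast hN
  rw [abs_mul, abs_of_pos (one_div_pos.2 hN0), one_div, inv_mul_le_iff₀ hN0]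
  refine (Finset.abs_sum_le_sum_abs _ _).trans ((Finset.sum_le_sum fun j _ => hf j).trans ?_)
  simp

lemma bestResp_contracting (hN : 1 ≤ N) (hΓ : ∀ q, 1 ≤ Γ q)
    (hsnr : ∀ q, 0 < snr q) (hinr : ∀ r q, r ≠ q → 0 ≤ inr r q ∧ inr r q ≤ 1)
    (hbd : ∀ q k, noiseBound Hbar Γ q k / snr q ≤ 1 / 4) :
    ContractingWith (1 / 2) (bestResp Hbar Γ snr inr) := by
  refine ⟨by rw [← NNReal.coe_lt_coe]; norm_num, LipschitzWith.of_dist_le_mul fun p p' => ?_⟩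
  have hd : 0 ≤ dist p p' := dist_nonneg
  have hn : ∀ q k, |noise Hbar Γ snr inr p q k - noise Hbar Γ snr inr p' q k| ≤
      1 / 4 * dist p p' := fun q k =>
    (noise_lipschitz hΓ hsnr hinr p p' q k).trans (mul_le_mul_of_nonneg_right (hbd q k) hd)
  refine (dist_pi_le_iff (by positivity)).2 fun q => (dist_pi_le_iff (by positivity)).2 fun k => ?_
  have h1 := abs_mean_le hN _ _ (hn q)
  have h2 := hn q k
  have heq : bestResp Hbar Γ snr inr p q k - bestResp Hbar Γ snr inr p' q k =
      (1 / (N : ℝ)) * ∑ j, (noise Hbar Γ snr inr p q j - noise Hbar Γ snr inr p' q j) -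
        (noise Hbar Γ snr inr p q k - noise Hbar Γ snr inr p' q k) := by
    unfold bestResp
    rw [Finset.sum_sub_distrib]
    ring
  rw [Real.dist_eq, heq]
  refine (abs_sub _ _).trans ?_
  push_cast
  linarith

lemma bestResp_near_one (hN : 1 ≤ N) (hH : ∀ q k, Hbar q q k ≠ 0) (hΓ : ∀ q, 1 ≤ Γ q)
    (hsnr : ∀ q, 0 < snr q) (hinr : ∀ r q, r ≠ q → 0 ≤ inr r q ∧ inr r q ≤ 1) {η : ℝ}
    (hbd : ∀ q k, noiseBound Hbar Γ q k / snr q ≤ η)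
    {p : Fin Q → Fin N → ℝ} (hp : ∀ q, p q ∈ stratSet N) (q : Fin Q) (k : Fin N) :
    |bestResp Hbar Γ snr inr p q k - 1| ≤ η := by
  have hN0 : (0 : ℝ) < N := by exact_mod_cast hN
  have h0 := fun j => noise_pos hH hΓ hsnr hinr hp q j
  have h1 := fun j => (noise_le hΓ hsnr hinr hp q j).trans (hbd q j)
  have h2 := abs_mean_le hN (noise Hbar Γ snr inr p q) η
    (fun j => by rw [abs_of_pos (h0 j)]; exact h1 j)
  have h3 : 0 ≤ (1 / (N : ℝ)) * ∑ j, noise Hbar Γ snr inr p q j :=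
    mul_nonneg (by positivity) (Finset.sum_nonneg fun j _ => (h0 j).le)
  rw [abs_of_nonneg h3] at h2
  have h4 := h0 k
  have h5 := h1 k
  unfold bestResp
  rw [abs_le]
  constructor <;> linarith

lemma mean_bestResp (hN : 1 ≤ N) (p : Fin Q → Fin N → ℝ) (q : Fin Q) :
    (1 / (N : ℝ)) * ∑ k, bestResp Hbar Γ snr inr p q k = 1 := by
  have hN0 : (0 : ℝ) < N := by exact_mod_cast hN
  unfold bestResp
  rw [Finset.sum_sub_distrib]
  simp only [Finset.sum_const, Finset.card_univ, Fintype.card_fin, nsmul_eq_mul]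
  field_simp
  ring

end

/-- Existence, uniqueness, positivity and flatness once the noise levels are at most
`η = min (1/4) (δ/2)`; the bound `1/4` makes `bestResp` a `1/2`-contraction. -/
lemma low_interference_aux (hN : 1 ≤ N)
    (Hbar : Fin Q → Fin Q → Fin N → ℂ) (hH : ∀ q k, Hbar q q k ≠ 0)
    (Γ : Fin Q → ℝ) (hΓ : ∀ q, 1 ≤ Γ q) (δ : ℝ) (hδ : 0 < δ) :
    ∃ ε : Fin Q → Fin Q → ℝ, ∃ S : Fin Q → ℝ,
      (∀ r q, r ≠ q → 0 < ε r q) ∧ (∀ q, 0 < S q) ∧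
      ∀ (snr : Fin Q → ℝ) (inr : Fin Q → Fin Q → ℝ),
        (∀ q, S q ≤ snr q) →
        (∀ r q, r ≠ q → 0 ≤ inr r q ∧ inr r q ≤ ε r q) →
        (∃! p : Fin Q → Fin N → ℝ, isNE Hbar Γ snr inr p) ∧
        ∀ p : Fin Q → Fin N → ℝ, isNE Hbar Γ snr inr p →
          (∀ q k, 0 < p q k) ∧ ∀ q k, |p q k - 1| < δ := by
  have hN0 : (0 : ℝ) < N := by exact_mod_cast hN
  set η : ℝ := min (1 / 4) (δ / 2) with hη
  have hη0 : 0 < η := by positivity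
  have hη4 : η ≤ 1 / 4 := min_le_left _ _
  have hηδ : η ≤ δ / 2 := min_le_right _ _
  have hB : ∀ q k, 0 ≤ noiseBound Hbar Γ q k := by
    intro q k
    have : 0 ≤ Γ q := by linarith [hΓ q]
    unfold noiseBound
    positivity
  have hBs : ∀ q, 0 ≤ (∑ k, noiseBound Hbar Γ q k) / η := fun q =>
    div_nonneg (Finset.sum_nonneg fun k _ => hB q k) hη0.le
  refine ⟨fun _ _ => 1, fun q => 1 + (∑ k, noiseBound Hbar Γ q k) / η, fun _ _ _ => one_pos,
    fun q => by linarith [hBs q], fun snr inr hS hinr => ?_⟩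
  have hsnr : ∀ q, 0 < snr q := fun q => by linarith [hBs q, hS q]
  have hbd : ∀ q k, noiseBound Hbar Γ q k / snr q ≤ η := by
    intro q k
    have h1 : (∑ k, noiseBound Hbar Γ q k) / η ≤ snr q := by linarith [hS q]
    rw [div_le_iff₀ hη0] at h1
    rw [div_le_iff₀ (hsnr q)]
    have h2 := Finset.single_le_sum (fun j _ => hB q j) (Finset.mem_univ k)
    linarith
  have hNE := isNE_iff hN hH hΓ hsnr hinr
    (fun q k => (hbd q k).trans_lt (by linarith))
  have hc := bestResp_contracting hN hΓ hsnr hinr (fun q k => (hbd q k).trans hη4)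
  set f := bestResp Hbar Γ snr inr with hf
  have hone : ∀ _ : Fin Q, (fun _ : Fin N => (1 : ℝ)) ∈ stratSet N := fun _ =>
    ⟨fun _ => zero_le_one, by simp [hN0.ne']⟩
  refine ⟨⟨hc.fixedPoint f, (hNE _).2 ⟨fun q => ⟨fun k => ?_, ?_⟩, hc.fixedPoint_isFixedPt⟩,
    fun p hp => hc.fixedPoint_unique ((hNE p).1 hp).2⟩, fun p hp => ?_⟩
  · -- the fixed point is within `η / (1 - 1/2) ≤ 1/2` of the flat profile
    have h1 : dist (fun _ _ => 1) (f fun _ _ => 1) ≤ η := by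
      rw [dist_comm]
      exact (dist_pi_le_iff hη0.le).2 fun q => (dist_pi_le_iff hη0.le).2 fun k =>
        bestResp_near_one hN hH hΓ hsnr hinr hbd hone q k
    have h2 := hc.dist_fixedPoint_le (fun _ _ => 1)
    have h3 : dist (1 : ℝ) (hc.fixedPoint f q k) ≤ _ :=
      (dist_le_pi_dist (fun _ => (1 : ℝ)) (hc.fixedPoint f q) k).trans
        (dist_le_pi_dist (fun _ _ => (1 : ℝ)) (hc.fixedPoint f) q)
    rw [Real.dist_eq] at h3
    have h4 : (1 : ℝ) - ((1 / 2 : NNReal) : ℝ) = 1 / 2 := by push_cast; norm_num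
    rw [h4] at h2
    have h5 := (abs_le.1 ((h3.trans h2).trans (div_le_div_of_nonneg_right h1 (by norm_num)))).2
    linarith
  · rw [← hc.fixedPoint_isFixedPt]
    exact (mean_bestResp hN _ q).le
  · obtain ⟨hp1, hp2⟩ := (hNE p).1 hp
    have h := bestResp_near_one hN hH hΓ hsnr hinr hbd hp1
    rw [← hf, hp2] at h
    exact ⟨fun q k => by linarith [(abs_le.1 (h q k)).1], fun q k => by linarith [h q k]⟩

end SnrGame

/-- **Proposition 1 (low-interference case).** There exist thresholds `ε_rq > 0` (`r ≠ q`)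
and `S_q > 0` such that whenever `0 ≤ inr_rq ≤ ε_rq` and `snr_q ≥ S_q`, game `G` admits a
unique Nash equilibrium, at which every user transmits over the whole bandwidth
(`p*_q(k) > 0` for all `q, k`). Moreover, for every `δ > 0` the thresholds `S_q` can be
chosen large enough that additionally `|p*_q(k) − 1| < δ` for all `q, k` (the power
allocation tends to be flat). -/
theorem SnrGame.low_interference (Q N : ℕ) (hQ : 1 ≤ Q) (hN : 1 ≤ N)
    (Hbar : Fin Q → Fin Q → Fin N → ℂ) (hH : ∀ q k, Hbar q q k ≠ 0)
    (Γ : Fin Q → ℝ) (hΓ : ∀ q, 1 ≤ Γ q) :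
    (∃ ε : Fin Q → Fin Q → ℝ, ∃ S : Fin Q → ℝ,
      (∀ r q, r ≠ q → 0 < ε r q) ∧ (∀ q, 0 < S q) ∧
      ∀ (snr : Fin Q → ℝ) (inr : Fin Q → Fin Q → ℝ),
        (∀ q, S q ≤ snr q) →
        (∀ r q, r ≠ q → 0 ≤ inr r q ∧ inr r q ≤ ε r q) →
        (∃! p : Fin Q → Fin N → ℝ, SnrGame.isNE Hbar Γ snr inr p) ∧
        ∀ p : Fin Q → Fin N → ℝ, SnrGame.isNE Hbar Γ snr inr p →
          ∀ q k, 0 < p q k) ∧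
    (∀ δ : ℝ, 0 < δ →
      ∃ ε : Fin Q → Fin Q → ℝ, ∃ S : Fin Q → ℝ,
        (∀ r q, r ≠ q → 0 < ε r q) ∧ (∀ q, 0 < S q) ∧
        ∀ (snr : Fin Q → ℝ) (inr : Fin Q → Fin Q → ℝ),
          (∀ q, S q ≤ snr q) →
          (∀ r q, r ≠ q → 0 ≤ inr r q ∧ inr r q ≤ ε r q) →
          (∃! p : Fin Q → Fin N → ℝ, SnrGame.isNE Hbar Γ snr inr p) ∧
          ∀ p : Fin Q → Fin N → ℝ, SnrGame.isNE Hbar Γ snr inr p →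
            (∀ q k, 0 < p q k) ∧ ∀ q k, |p q k - 1| < δ) := by
  have key := SnrGame.low_interference_aux hN Hbar hH Γ hΓ
  refine ⟨?_, key⟩
  obtain ⟨ε, S, hε, hS, h⟩ := key 1 one_pos
  exact ⟨ε, S, hε, hS, fun snr inr h1 h2 =>
    ⟨(h snr inr h1 h2).1, fun p hp => ((h snr inr h1 h2).2 p hp).1⟩⟩
end

section
/- In the snr/inr parameterization of game G (no spectral-mask constraints), let p* be a Nash equilibrium whose supports I_q = { k : p*_q(k) > 0 } are pairwise disjoint across users and which uses full power: (1/N)·Σ_{k=1}^N p*_q(k) = 1 for every q. Suppose that Γ_q·inr_qr·|H̄_qr(k)|² ≤ snr_q·|H̄_qq(k)|² for every q, every r ≠ q, and every k ∈ I_q. Then the subcarriers are allocated according to: for all q ≠ r, all k_r ∈ I_r and all k_q ∈ I_q, |H̄_rr(k_r)|²/|H̄_qq(k_r)|² ≥ |H̄_rr(k_q)|²/|H̄_qq(k_q)|². (Proposition 2, subcarrier-allocation rule at orthogonal Nash equilibria.) -/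
namespace SnrGame

/-- First-order optimality for the single-user problem, with `g` the effective gains: if carrier `i`
carries power and carrier `j` carries none, the marginal rate on `j` is at most that on `i`. It is
obtained from the finite deviations moving power `d` from `i` to `j`. -/
theorem waterfill {N : ℕ} (g x : Fin N → ℝ) (hg : ∀ k, 0 ≤ g k) (hx : x ∈ stratSet N)
    (hmax : ∀ y ∈ stratSet N,
      ∑ k, Real.log (1 + g k * y k) ≤ ∑ k, Real.log (1 + g k * x k))
    (i j : Fin N) (hi : 0 < x i) (hj : x j = 0) :
    g j * (1 + g i * x i) ≤ g i := by
  have hij : i ≠ j := by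
    rintro rfl
    exact hi.ne' hj
  have hsplit : ∀ f : Fin N → ℝ,
      ∑ k, f k = f i + (f j + ∑ k ∈ (Finset.univ.erase i).erase j, f k) := by
    intro f
    rw [Finset.add_sum_erase _ _ (by simp [hij.symm]), Finset.add_sum_erase _ _ (by simp)]
  have key : ∀ d, 0 < d → d ≤ x i → g j * (1 + g i * (x i - d)) ≤ g i := by
    intro d hd hdi
    obtain ⟨y, hy⟩ : ∃ y, y = Function.update (Function.update x i (x i - d)) j d := ⟨_, rfl⟩
    have hyi : y i = x i - d := by simp [hy, hij]
    have hyj : y j = d := by simp [hy]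
    have hyk : ∀ k, k ≠ i → k ≠ j → y k = x k := by
      intro k h1 h2
      simp [hy, h1, h2]
    have hrest : ∀ F : Fin N → ℝ → ℝ, ∑ k ∈ (Finset.univ.erase i).erase j, F k (y k)
        = ∑ k ∈ (Finset.univ.erase i).erase j, F k (x k) := by
      intro F
      refine Finset.sum_congr rfl fun k hk => ?_
      simp only [Finset.mem_erase] at hk
      rw [hyk k hk.2.1 hk.1]
    have hymem : y ∈ stratSet N := by
      refine ⟨fun k => ?_, ?_⟩
      · by_cases h1 : k = i
        · rw [h1, hyi]
          linarith
        by_cases h2 : k = j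
        · rw [h2, hyj]
          exact hd.le
        rw [hyk k h1 h2]
        exact hx.1 k
      · have hsum : ∑ k, y k = ∑ k, x k := by
          rw [hsplit y, hsplit x, hrest fun _ t => t, hyi, hyj, hj]
          ring
        rw [hsum]
        exact hx.2
    have h := hmax y hymem
    rw [hsplit fun k => Real.log (1 + g k * y k), hsplit fun k => Real.log (1 + g k * x k),
      hrest fun k t => Real.log (1 + g k * t), hyi, hyj, hj, mul_zero, add_zero,
      Real.log_one] at h
    have hA : 0 < 1 + g i * (x i - d) := by
      have := mul_nonneg (hg i) (sub_nonneg.2 hdi)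
      linarith
    have hB : 0 < 1 + g j * d := by
      have := mul_nonneg (hg j) hd.le
      linarith
    have hC : 0 < 1 + g i * x i := by
      have := mul_nonneg (hg i) hi.le
      linarith
    have h2 : Real.log ((1 + g i * (x i - d)) * (1 + g j * d)) ≤ Real.log (1 + g i * x i) := by
      rw [Real.log_mul hA.ne' hB.ne']
      linarith
    have h3 := (Real.log_le_log_iff (mul_pos hA hB) hC).1 h2
    refine le_of_mul_le_mul_right ?_ hd
    linarith
  -- let `d → 0`
  by_contra! hcon
  obtain ⟨e, he⟩ : ∃ e, e = g j * (1 + g i * x i) - g i := ⟨_, rfl⟩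
  have hepos : 0 < e := by linarith
  have hc : 0 ≤ g j * g i := mul_nonneg (hg j) (hg i)
  have hd : 0 < min (x i) (e / (g j * g i + 1)) := lt_min hi (by positivity)
  have h := key _ hd (min_le_left _ _)
  have h1 : min (x i) (e / (g j * g i + 1)) * (g j * g i + 1) ≤ e :=
    (le_div_iff₀ (by positivity)).1 (min_le_right _ _)
  linarith

/-- Water-filling of user `q` between its own carrier `kq` and a carrier `kr` of user `r`, with the
interference at `kr` replaced by its upper bound `a_r(kr) p_r(kr)`. -/
theorem cross_bound {Q N : ℕ} (hN : 1 ≤ N)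
    (Hbar : Fin Q → Fin Q → Fin N → ℂ)
    (Γ : Fin Q → ℝ) (hΓ : ∀ q, 1 ≤ Γ q)
    (snr : Fin Q → ℝ) (hsnr : ∀ q, 0 < snr q)
    (inr : Fin Q → Fin Q → ℝ) (hinr : ∀ r q, r ≠ q → 0 ≤ inr r q)
    (p : Fin Q → Fin N → ℝ) (hNE : isNE Hbar Γ snr inr p)
    (horth : ∀ q r, q ≠ r → ∀ k, ¬(0 < p q k ∧ 0 < p r k))
    (hmed : ∀ q r, r ≠ q → ∀ k, 0 < p q k →
      Γ q * inr q r * ‖Hbar q r k‖ ^ 2 ≤ snr q * ‖Hbar q q k‖ ^ 2)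
    (q r : Fin Q) (hqr : q ≠ r) (kr kq : Fin N) (hr : 0 < p r kr) (hq : 0 < p q kq) :
    (1 / Γ q * (snr q * ‖Hbar q q kr‖ ^ 2)) *
        (1 + 1 / Γ q * (snr q * ‖Hbar q q kq‖ ^ 2) * p q kq) ≤
      (1 / Γ q * (snr q * ‖Hbar q q kq‖ ^ 2)) *
        (1 + 1 / Γ r * (snr r * ‖Hbar r r kr‖ ^ 2) * p r kr) := by
  have hΓpos : ∀ s, 0 < Γ s := fun s => one_pos.trans_le (hΓ s)
  have hp0 : ∀ s k, 0 ≤ p s k := fun s k => (hNE.1 s).1 k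
  have hzero : ∀ s t k, s ≠ t → 0 < p t k → p s k = 0 := by
    intro s t k hst ht
    by_contra h
    exact horth s t hst k ⟨lt_of_le_of_ne (hp0 s k) (Ne.symm h), ht⟩
  obtain ⟨J, hJ⟩ : ∃ J : Fin N → ℝ, ∀ k, J k =
    ∑ s ∈ Finset.univ.erase q, inr s q * ‖Hbar s q k‖ ^ 2 * p s k := ⟨_, fun _ => rfl⟩
  obtain ⟨a, ha⟩ : ∃ a : Fin N → ℝ, ∀ k, a k = 1 / Γ q * (snr q * ‖Hbar q q k‖ ^ 2) :=
    ⟨_, fun _ => rfl⟩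
  have hJ0 : ∀ k, 0 ≤ J k := by
    intro k
    rw [hJ]
    refine Finset.sum_nonneg fun s hs => ?_
    have := hinr s q (Finset.ne_of_mem_erase hs)
    have := hp0 s k
    positivity
  have ha0 : ∀ k, 0 ≤ a k := by
    intro k
    rw [ha]
    have := hΓpos q
    have := hsnr q
    positivity
  have hpay : ∀ y : Fin N → ℝ, payoff Hbar Γ snr inr q (Function.update p q y) =
      1 / (N : ℝ) * ∑ k, Real.log (1 + a k / (1 + J k) * y k) := by
    intro y
    unfold payoff
    congr 1
    refine Finset.sum_congr rfl fun k _ => ?_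
    have hs : ∑ s ∈ Finset.univ.erase q,
        inr s q * ‖Hbar s q k‖ ^ 2 * Function.update p q y s k = J k := by
      rw [hJ]
      refine Finset.sum_congr rfl fun s hs => ?_
      rw [Function.update_of_ne (Finset.ne_of_mem_erase hs)]
    rw [hs, Function.update_self, ha]
    congr 2
    ring
  have hNpos : (0 : ℝ) < 1 / (N : ℝ) := by
    have : (0 : ℝ) < N := by exact_mod_cast hN
    positivity
  have hw := waterfill (fun k => a k / (1 + J k)) (p q)
    (fun k => div_nonneg (ha0 k) (by linarith [hJ0 k])) (hNE.1 q)
    (by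
      intro y hy
      have h := hNE.2 q y hy
      rw [← Function.update_eq_self q p, Function.update_idem, hpay, hpay] at h
      exact le_of_mul_le_mul_left h hNpos)
    kq kr hq (hzero q r kr hqr hr)
  have hJq : J kq = 0 := by
    rw [hJ]
    refine Finset.sum_eq_zero fun s hs => ?_
    rw [hzero s q kq (Finset.ne_of_mem_erase hs) hq, mul_zero]
  have hJr : J kr ≤ 1 / Γ r * (snr r * ‖Hbar r r kr‖ ^ 2) * p r kr := by
    have : J kr = inr r q * ‖Hbar r q kr‖ ^ 2 * p r kr := by
      rw [hJ]
      refine Finset.sum_eq_single_of_mem r (by simp [hqr.symm]) fun s _ hs => ?_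
      rw [hzero s r kr hs hr, mul_zero]
    rw [this]
    refine mul_le_mul_of_nonneg_right ?_ hr.le
    rw [one_div, inv_mul_eq_div, le_div_iff₀ (hΓpos r)]
    linarith [hmed r q hqr kr hr]
  have hpos : 0 < 1 + J kr := by linarith [hJ0 kr]
  simp only [hJq, add_zero, div_one] at hw
  rw [div_mul_eq_mul_div, div_le_iff₀ hpos] at hw
  rw [← ha, ← ha]
  exact hw.trans (mul_le_mul_of_nonneg_left (by linarith) (ha0 kq))

end SnrGame

/-- **Proposition 2 (subcarrier-allocation rule at orthogonal Nash equilibria).**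
Let `p*` be a Nash equilibrium with pairwise disjoint supports using full power, and suppose
`Γ_q inr_qr |H̄_qr(k)|² ≤ snr_q |H̄_qq(k)|²` for every `q`, `r ≠ q` and `k ∈ I_q`. Then for
all `q ≠ r`, `k_r ∈ I_r` and `k_q ∈ I_q`:
`|H̄_rr(k_r)|²/|H̄_qq(k_r)|² ≥ |H̄_rr(k_q)|²/|H̄_qq(k_q)|²`. -/
theorem SnrGame.subcarrier_allocation (Q N : ℕ) (hQ : 1 ≤ Q) (hN : 1 ≤ N)
    (Hbar : Fin Q → Fin Q → Fin N → ℂ) (hH : ∀ q k, Hbar q q k ≠ 0)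
    (Γ : Fin Q → ℝ) (hΓ : ∀ q, 1 ≤ Γ q)
    (snr : Fin Q → ℝ) (hsnr : ∀ q, 0 < snr q)
    (inr : Fin Q → Fin Q → ℝ) (hinr : ∀ r q, r ≠ q → 0 ≤ inr r q)
    (p : Fin Q → Fin N → ℝ) (hNE : SnrGame.isNE Hbar Γ snr inr p)
    (horth : ∀ q r, q ≠ r → ∀ k, ¬(0 < p q k ∧ 0 < p r k))
    (hfull : ∀ q, (1 / (N : ℝ)) * ∑ k, p q k = 1)
    (hmed : ∀ q r, r ≠ q → ∀ k, 0 < p q k →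
      Γ q * inr q r * ‖Hbar q r k‖ ^ 2 ≤ snr q * ‖Hbar q q k‖ ^ 2) :
    ∀ q r, q ≠ r → ∀ kr kq : Fin N, 0 < p r kr → 0 < p q kq →
      ‖Hbar r r kq‖ ^ 2 / ‖Hbar q q kq‖ ^ 2 ≤ ‖Hbar r r kr‖ ^ 2 / ‖Hbar q q kr‖ ^ 2 := by
  intro q r hqr kr kq hr hq
  have h1 := SnrGame.cross_bound hN Hbar Γ hΓ snr hsnr inr hinr p hNE horth hmed q r hqr kr kq hr hq
  have h2 := SnrGame.cross_bound hN Hbar Γ hΓ snr hsnr inr hinr p hNE horth hmed r q hqr.symm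
    kq kr hq hr
  have hcoef : ∀ s, 0 < 1 / Γ s * snr s := fun s =>
    mul_pos (one_div_pos.2 (one_pos.trans_le (hΓ s))) (hsnr s)
  have hn : ∀ s k, 0 < ‖Hbar s s k‖ ^ 2 := fun s k => pow_pos (norm_pos_iff.2 (hH s k)) 2
  simp only [← mul_assoc] at h1 h2
  obtain ⟨X, hX⟩ : ∃ X, X = 1 + 1 / Γ q * snr q * ‖Hbar q q kq‖ ^ 2 * p q kq := ⟨_, rfl⟩
  obtain ⟨Y, hY⟩ : ∃ Y, Y = 1 + 1 / Γ r * snr r * ‖Hbar r r kr‖ ^ 2 * p r kr := ⟨_, rfl⟩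
  have hX0 : 0 < X := by
    rw [hX]
    have := mul_pos (mul_pos (hcoef q) (hn q kq)) hq
    linarith
  have hY0 : 0 < Y := by
    rw [hY]
    have := mul_pos (mul_pos (hcoef r) (hn r kr)) hr
    linarith
  rw [← hX, ← hY] at h1 h2
  rw [mul_assoc, mul_assoc _ _ Y] at h1
  rw [mul_assoc, mul_assoc _ _ X] at h2
  have h3 := le_of_mul_le_mul_left h1 (hcoef q)
  have h4 := le_of_mul_le_mul_left h2 (hcoef r)
  have h5 := mul_le_mul h3 h4 (mul_pos (hn r kq) hY0).le (mul_pos (hn q kq) hY0).le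
  rw [div_le_div_iff₀ (hn q kq) (hn q kr)]
  refine le_of_mul_le_mul_right ?_ (mul_pos hX0 hY0)
  linarith
end

section
/- With the high-SINR rates, the rate region R = { r ∈ ℝ^Q : r_q ≥ 0 for all q, and there exists p ∈ P_1°×…×P_Q° with r_q ≤ R_q(p) for all q } is a convex subset of ℝ^Q. (Proposition 3: convexity of the achievable rate region in the low-interference/high-SNR regime.) -/
/-!
The rates are concave in the logarithms of the powers: `log (G p)` is affine in `log p`, and
the log of the interference term, `log (1 + ∑ G p)`, is a log-sum-exp, hence convex (Hölder,
`one_add_sum_geom_le`). So if `x` and `y` achieve two rate vectors, the componentwise geometric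
mean `x^a y^b` achieves their convex combination (`combo_rate_le_rate_geom`), and it is
admissible because it is dominated by the arithmetic mean `a x + b y` (`geom_mem_stratSet`).
-/

open scoped ENNReal

namespace HighSinr

/-- Strategy set `P_q°` with strictly positive powers, spectral-mask limits in `(0,∞]`,
and average power at most `1`. -/
def stratSet (N : ℕ) (pmax : Fin N → ℝ≥0∞) : Set (Fin N → ℝ) :=
  { p | (∀ k, 0 < p k ∧ ENNReal.ofReal (p k) ≤ pmax k) ∧
        (1 / (N : ℝ)) * ∑ k, p k ≤ 1 }

variable {Q N : ℕ}

/-- High-SINR (low-interference) rate of user `q`: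
`R_q(p) = (1/N) Σ_k log(G_qq(k) p_q(k) / (1 + Σ_{r≠q} G_rq(k) p_r(k)))`. -/
noncomputable def rate (Gc : Fin Q → Fin Q → Fin N → ℝ) (q : Fin Q)
    (p : Fin Q → Fin N → ℝ) : ℝ :=
  (1 / (N : ℝ)) * ∑ k, Real.log (Gc q q k * p q k /
    (1 + ∑ r ∈ Finset.univ.erase q, Gc r q k * p r k))

end HighSinr

namespace HighSinr

/-- Hölder's inequality with weights `a + b = 1` for `1 + ∑ g x^a y^b`. Dividing by the right-hand
side and applying weighted AM-GM to every term reduces it to `a + b = 1`. -/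
lemma one_add_sum_geom_le {ι : Type*} (s : Finset ι) (g x y : ι → ℝ)
    (hg : ∀ i, 0 < g i) (hx : ∀ i, 0 < x i) (hy : ∀ i, 0 < y i)
    {a b : ℝ} (ha : 0 ≤ a) (hb : 0 ≤ b) (hab : a + b = 1) :
    1 + ∑ i ∈ s, g i * (x i ^ a * y i ^ b) ≤
      (1 + ∑ i ∈ s, g i * x i) ^ a * (1 + ∑ i ∈ s, g i * y i) ^ b := by
  have hS : 0 < 1 + ∑ i ∈ s, g i * x i :=
    add_pos_of_pos_of_nonneg one_pos
      (Finset.sum_nonneg fun i _ => (mul_pos (hg i) (hx i)).le)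
  have hT : 0 < 1 + ∑ i ∈ s, g i * y i :=
    add_pos_of_pos_of_nonneg one_pos
      (Finset.sum_nonneg fun i _ => (mul_pos (hg i) (hy i)).le)
  set S := 1 + ∑ i ∈ s, g i * x i with hSdef
  set T := 1 + ∑ i ∈ s, g i * y i with hTdef
  clear_value S T
  have hST : 0 < S ^ a * T ^ b := mul_pos (Real.rpow_pos_of_pos hS a) (Real.rpow_pos_of_pos hT b)
  have amgm : ∀ c u v : ℝ, 0 < c → 0 < u → 0 < v →
      c * (u ^ a * v ^ b) / (S ^ a * T ^ b) ≤ a * (c * u / S) + b * (c * v / T) := by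
    intro c u v hc hu hv
    have h := Real.geom_mean_le_arith_mean2_weighted ha hb
      (div_pos hu hS).le (div_pos hv hT).le hab
    rw [Real.div_rpow hu.le hS.le, Real.div_rpow hv.le hT.le] at h
    calc c * (u ^ a * v ^ b) / (S ^ a * T ^ b)
        = c * (u ^ a / S ^ a * (v ^ b / T ^ b)) := by rw [div_mul_div_comm, mul_div_assoc]
      _ ≤ c * (a * (u / S) + b * (v / T)) := mul_le_mul_of_nonneg_left h hc.le
      _ = _ := by ring
  rw [← div_le_one hST, add_div]
  have h1 := amgm 1 1 1 one_pos one_pos one_pos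
  simp only [Real.one_rpow, mul_one] at h1
  have h2 := Finset.sum_le_sum fun i (_ : i ∈ s) => amgm (g i) (x i) (y i) (hg i) (hx i) (hy i)
  rw [Finset.sum_add_distrib, ← Finset.mul_sum, ← Finset.mul_sum, ← Finset.sum_div,
    ← Finset.sum_div, ← Finset.sum_div] at h2
  have hS1 : 1 / S + (∑ i ∈ s, g i * x i) / S = 1 := by
    rw [← add_div, ← hSdef, div_self hS.ne']
  have hT1 : 1 / T + (∑ i ∈ s, g i * y i) / T = 1 := by
    rw [← add_div, ← hTdef, div_self hT.ne']
  linear_combination h1 + h2 + a * hS1 + b * hT1 + hab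

lemma geom_mem_stratSet {N : ℕ} {pmax : Fin N → ℝ≥0∞} {x y : Fin N → ℝ}
    (hx : x ∈ stratSet N pmax) (hy : y ∈ stratSet N pmax)
    {a b : ℝ} (ha : 0 ≤ a) (hb : 0 ≤ b) (hab : a + b = 1) :
    (fun k => x k ^ a * y k ^ b) ∈ stratSet N pmax := by
  have amgm : ∀ k, x k ^ a * y k ^ b ≤ a * x k + b * y k := fun k =>
    Real.geom_mean_le_arith_mean2_weighted ha hb (hx.1 k).1.le (hy.1 k).1.le hab
  refine ⟨fun k => ⟨mul_pos (Real.rpow_pos_of_pos (hx.1 k).1 a)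
    (Real.rpow_pos_of_pos (hy.1 k).1 b), ?_⟩, ?_⟩
  · have hmax : x k ^ a * y k ^ b ≤ max (x k) (y k) :=
      (amgm k).trans (by
        have h1 := mul_le_mul_of_nonneg_left (le_max_left (x k) (y k)) ha
        have h2 := mul_le_mul_of_nonneg_left (le_max_right (x k) (y k)) hb
        linear_combination h1 + h2 + max (x k) (y k) * hab)
    rcases le_max_iff.1 hmax with h | h
    · exact (ENNReal.ofReal_le_ofReal h).trans (hx.1 k).2
    · exact (ENNReal.ofReal_le_ofReal h).trans (hy.1 k).2
  · have hs := Finset.sum_le_sum fun k (_ : k ∈ Finset.univ) => amgm k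
    rw [Finset.sum_add_distrib, ← Finset.mul_sum, ← Finset.mul_sum] at hs
    have hN : (0 : ℝ) ≤ 1 / (N : ℝ) := by positivity
    have h1 := mul_le_mul_of_nonneg_left hs hN
    have h2 := mul_le_mul_of_nonneg_left hx.2 ha
    have h3 := mul_le_mul_of_nonneg_left hy.2 hb
    linear_combination h1 + h2 + h3 + hab

/-- In logarithmic power coordinates the rate is concave. -/
lemma combo_rate_le_rate_geom {Q N : ℕ} {Gc : Fin Q → Fin Q → Fin N → ℝ}
    (hGc : ∀ r q k, 0 < Gc r q k) {x y : Fin Q → Fin N → ℝ}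
    (hx : ∀ q k, 0 < x q k) (hy : ∀ q k, 0 < y q k)
    {a b : ℝ} (ha : 0 ≤ a) (hb : 0 ≤ b) (hab : a + b = 1) (q : Fin Q) :
    a * rate Gc q x + b * rate Gc q y ≤ rate Gc q (fun r k => x r k ^ a * y r k ^ b) := by
  have hden : ∀ z : Fin Q → Fin N → ℝ, (∀ q k, 0 < z q k) → ∀ k,
      0 < 1 + ∑ r ∈ Finset.univ.erase q, Gc r q k * z r k := fun z hz k =>
    add_pos_of_pos_of_nonneg one_pos
      (Finset.sum_nonneg fun r _ => (mul_pos (hGc r q k) (hz r k)).le)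
  have hz : ∀ q k, 0 < x q k ^ a * y q k ^ b := fun q k =>
    mul_pos (Real.rpow_pos_of_pos (hx q k) a) (Real.rpow_pos_of_pos (hy q k) b)
  have hlog : ∀ z : Fin Q → Fin N → ℝ, (∀ q k, 0 < z q k) → ∀ k,
      Real.log (Gc q q k * z q k / (1 + ∑ r ∈ Finset.univ.erase q, Gc r q k * z r k)) =
        Real.log (Gc q q k) + Real.log (z q k) -
          Real.log (1 + ∑ r ∈ Finset.univ.erase q, Gc r q k * z r k) := fun z hz k => by
    rw [Real.log_div (mul_pos (hGc q q k) (hz q k)).ne' (hden z hz k).ne',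
      Real.log_mul (hGc q q k).ne' (hz q k).ne']
  unfold rate
  have hN : (0 : ℝ) ≤ 1 / (N : ℝ) := by positivity
  rw [mul_left_comm a, mul_left_comm b, ← mul_add, Finset.mul_sum, Finset.mul_sum,
    ← Finset.sum_add_distrib]
  refine mul_le_mul_of_nonneg_left (Finset.sum_le_sum fun k _ => ?_) hN
  rw [hlog x hx, hlog y hy, hlog _ hz]
  have hH := Real.log_le_log (hden _ hz k)
    (one_add_sum_geom_le (Finset.univ.erase q) (fun r => Gc r q k) (fun r => x r k)
      (fun r => y r k) (fun r => hGc r q k) (fun r => hx r k) (fun r => hy r k) ha hb hab)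
  rw [Real.log_mul (Real.rpow_pos_of_pos (hden x hx k) a).ne'
      (Real.rpow_pos_of_pos (hden y hy k) b).ne',
    Real.log_rpow (hden x hx k), Real.log_rpow (hden y hy k)] at hH
  rw [Real.log_mul (Real.rpow_pos_of_pos (hx q k) a).ne' (Real.rpow_pos_of_pos (hy q k) b).ne',
    Real.log_rpow (hx q k), Real.log_rpow (hy q k)]
  linear_combination hH + Real.log (Gc q q k) * hab

end HighSinr

/-- **Proposition 3 (convexity of the achievable rate region in the
low-interference/high-SNR regime).** With the high-SINR rates, the rate region
`R = { r ∈ ℝ^Q : r_q ≥ 0 ∀q, ∃ p ∈ P_1°×…×P_Q°, r_q ≤ R_q(p) ∀q }` is convex. -/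
theorem HighSinr.rate_region_convex (Q N : ℕ) (hQ : 1 ≤ Q) (hN : 1 ≤ N)
    (Gc : Fin Q → Fin Q → Fin N → ℝ) (hGc : ∀ r q k, 0 < Gc r q k)
    (pmax : Fin Q → Fin N → ℝ≥0∞) (hpmax : ∀ q k, 0 < pmax q k) :
    Convex ℝ { r : Fin Q → ℝ | (∀ q, 0 ≤ r q) ∧
      ∃ p : Fin Q → Fin N → ℝ, (∀ q, p q ∈ HighSinr.stratSet N (pmax q)) ∧
        ∀ q, r q ≤ HighSinr.rate Gc q p } := by
  rintro r ⟨hr0, x, hx, hrx⟩ s ⟨hs0, y, hy, hsy⟩ a b ha hb hab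
  refine ⟨fun q => add_nonneg (mul_nonneg ha (hr0 q)) (mul_nonneg hb (hs0 q)),
    fun q k => x q k ^ a * y q k ^ b,
    fun q => HighSinr.geom_mem_stratSet (hx q) (hy q) ha hb hab, fun q => ?_⟩
  exact (add_le_add (mul_le_mul_of_nonneg_left (hrx q) ha)
    (mul_le_mul_of_nonneg_left (hsy q) hb)).trans
    (HighSinr.combo_rate_le_rate_geom hGc (fun q k => ((hx q).1 k).1)
      (fun q k => ((hy q).1 k).1) ha hb hab q)
end
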